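/- arXiv:2307.09581 — 8 statements merged into one kernel-verified Lean document; each statement's English description precedes it below -/
import Mathlib

section
/- For every real polynomial p, the truncated Laguerre functional satisfies the distributional Pearson equation D(φℓ) + ψℓ = 0 with φ(x) = (x−z)x and ψ(x) = −x(z+2+α−x) + z(1+α); explicitly, −∫₀^z (x−z)·x·p′(x)·x^α·e^{−x} dx + ∫₀^z (−x(z+2+α−x) + z(1+α))·p(x)·x^α·e^{−x} dx = 0. -/
open MeasureTheory intervalIntegral

/-- The truncated Laguerre functional `⟨ℓ, p⟩ = ∫₀^z p(x) x^α e^{−x} dx` satisfies the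
distributional Pearson equation `D(φℓ) + ψℓ = 0` with `φ(x) = (x−z)x` and
`ψ(x) = −x(z+2+α−x) + z(1+α)`. -/
theorem truncated_laguerre_pearson (α z : ℝ) (hα : -1 < α) (hz : 0 < z) (p : Polynomial ℝ) :
    -(∫ x in (0:ℝ)..z,
        (x - z) * x * (Polynomial.derivative p).eval x * x ^ α * Real.exp (-x)) +
      (∫ x in (0:ℝ)..z,
        (-(x * (z + 2 + α - x)) + z * (1 + α)) * p.eval x * x ^ α * Real.exp (-x)) = 0 := by
  have key : ∀ g : ℝ → ℝ, Continuous g →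
      IntervalIntegrable (fun x => g x * x ^ α * Real.exp (-x)) volume 0 z := by
    intro g hg
    have h1 : IntervalIntegrable (fun x : ℝ => x ^ α) volume 0 z :=
      intervalIntegral.intervalIntegrable_rpow' hα
    exact (h1.continuousOn_mul hg.continuousOn).mul_continuousOn
      (by fun_prop : Continuous fun x : ℝ => Real.exp (-x)).continuousOn
  have i1 := key (fun x => (x - z) * x * (Polynomial.derivative p).eval x)
    (by fun_prop)
  have i2 := key (fun x => (-(x * (z + 2 + α - x)) + z * (1 + α)) * p.eval x)
    (by fun_prop)
  have hF := integral_eq_sub_of_hasDerivAt_of_le (a := 0) (b := z)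
    (f := fun x => (x - z) * x ^ (α + 1) * Real.exp (-x) * p.eval x) hz.le
    (by
      have : Continuous fun x : ℝ => x ^ (α + 1) :=
        Real.continuous_rpow_const (by linarith)
      exact Continuous.continuousOn (by fun_prop))
    (fun x hx => by
      have hx0 : 0 < x := hx.1
      have d1 := (hasDerivAt_id x).sub_const z
      have d2 := Real.hasDerivAt_rpow_const (x := x) (p := α + 1) (Or.inl hx0.ne')
      have d3 := (hasDerivAt_id x).neg.exp
      have d := ((d1.mul d2).mul d3).mul (p.hasDerivAt x)
      refine d.congr_deriv (f' := _) (g' := (x - z) * x * (Polynomial.derivative p).eval x * x ^ α * Real.exp (-x) - (-(x * (z + 2 + α - x)) + z * (1 + α)) * p.eval x * x ^ α * Real.exp (-x)) ?_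
      have e : x ^ (α + 1) = x ^ α * x := Real.rpow_add_one hx0.ne' α
      have e2 : α + 1 - 1 = α := by ring
      simp only [Pi.mul_apply, Pi.neg_apply, id, e, e2]
      ring)
    (i1.sub i2)
  rw [integral_sub i1 i2] at hF
  have h0 : (0:ℝ) ^ (α + 1) = 0 := Real.zero_rpow (by linarith)
  simp only [h0, sub_self, zero_mul, mul_zero] at hF
  linarith
end

section
/- The moments h_m = ∫_{−√z}^{√z} x^m |x|^{2α+1} e^{−x²} dx of the truncated generalized Hermite functional satisfy: (i) h_{2k+1} = 0 for all k ≥ 0; (ii) h_{2m} = ∫₀^z x^{m+α} e^{−x} dx for all m ≥ 0; and (iii) h_{2n+4} − (n + z + 2 + α)·h_{2n+2} + z·(n + α + 1)·h_{2n} = 0 for all n ≥ 0, with h₂ = (α+1)h₀ − z^{α+1} e^{−z}. -/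
open MeasureTheory intervalIntegral

lemma tgh_int (r z : ℝ) (hr : -1 < r) :
    IntervalIntegrable (fun x : ℝ => x ^ r * Real.exp (-x)) volume 0 z :=
  (intervalIntegral.intervalIntegrable_rpow' hr).mul_continuousOn (by fun_prop)

lemma tgh_rec (r z : ℝ) (hr : -1 < r) (hz : 0 < z) :
    ∫ x in (0:ℝ)..z, x ^ (r + 1) * Real.exp (-x) =
      (r + 1) * (∫ x in (0:ℝ)..z, x ^ r * Real.exp (-x)) - z ^ (r + 1) * Real.exp (-z) := by
  have i1 := tgh_int r z hr
  have i2 := tgh_int (r + 1) z (by linarith)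
  have key := intervalIntegral.integral_eq_sub_of_hasDerivAt_of_le (a := 0) (b := z)
    (f := fun x : ℝ => x ^ (r + 1) * Real.exp (-x))
    (f' := fun x : ℝ => (r + 1) * (x ^ r * Real.exp (-x)) - x ^ (r + 1) * Real.exp (-x))
    hz.le
    ((Real.continuous_rpow_const (by linarith)).mul (by fun_prop)).continuousOn
    (fun x hx => by
      have h1 := Real.hasDerivAt_rpow_const (x := x) (p := r + 1) (Or.inl hx.1.ne')
      have h2 := (hasDerivAt_neg x).exp
      have h3 := h1.mul h2
      refine h3.congr_deriv ?_
      rw [add_sub_cancel_right]; ring)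
    ((i1.const_mul _).sub i2)
  rw [intervalIntegral.integral_sub (i1.const_mul _) i2,
    intervalIntegral.integral_const_mul, Real.zero_rpow (by linarith)] at key
  linarith

lemma tgh_half (r z : ℝ) (hz : 0 < z) :
    ∫ x in (0:ℝ)..(Real.sqrt z), 2 * (x ^ (2 * r + 1) * Real.exp (-x ^ 2)) =
      ∫ x in (0:ℝ)..z, x ^ r * Real.exp (-x) := by
  have key := intervalIntegral.integral_comp_mul_deriv_of_deriv_nonneg (a := 0) (b := √z)
    (f := fun x : ℝ => x ^ 2) (f' := fun x : ℝ => 2 * x)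
    (g := fun x : ℝ => x ^ r * Real.exp (-x)) (by fun_prop)
    (fun x hx => by simpa using hasDerivAt_pow 2 x)
    (fun x hx => by
      rw [min_eq_left (Real.sqrt_nonneg z)] at hx
      have := hx.1
      linarith)
  simp only [Function.comp, Real.sq_sqrt hz.le, ne_eq, OfNat.ofNat_ne_zero, not_false_eq_true,
    zero_pow] at key
  rw [← key]
  apply intervalIntegral.integral_congr_ae
  refine Filter.Eventually.of_forall fun x hx => ?_
  rw [Set.uIoc_of_le (Real.sqrt_nonneg z)] at hx
  have hx0 := hx.1
  rw [Real.rpow_add hx0, Real.rpow_mul hx0.le, Real.rpow_one, Real.rpow_two]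
  ring

theorem truncated_generalized_hermite_moments (α z : ℝ) (hα : -1 < α) (hz : 0 < z)
    (h : ℕ → ℝ)
    (hh : ∀ m : ℕ, h m =
      ∫ x in (-(Real.sqrt z))..(Real.sqrt z), x ^ m * |x| ^ (2 * α + 1) * Real.exp (-x ^ 2)) :
    (∀ k : ℕ, h (2 * k + 1) = 0) ∧
      (∀ m : ℕ, h (2 * m) = ∫ x in (0:ℝ)..z, x ^ ((m : ℝ) + α) * Real.exp (-x)) ∧
      (∀ n : ℕ, h (2 * n + 4) - ((n : ℝ) + z + 2 + α) * h (2 * n + 2)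
          + z * ((n : ℝ) + α + 1) * h (2 * n) = 0) ∧
      h 2 = (α + 1) * h 0 - z ^ (α + 1) * Real.exp (-z) := by
  have hodd : ∀ k : ℕ, h (2 * k + 1) = 0 := by
    intro k
    have h1 := intervalIntegral.integral_comp_neg (a := -√z) (b := √z)
      (fun x : ℝ => x ^ (2 * k + 1) * |x| ^ (2 * α + 1) * Real.exp (-x ^ 2))
    simp only [neg_neg, abs_neg, Odd.neg_pow (⟨k, rfl⟩ : Odd (2 * k + 1)), neg_mul,
      intervalIntegral.integral_neg, even_two, Even.neg_pow] at h1
    rw [hh]; linarith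
  have heven : ∀ m : ℕ, h (2 * m) = ∫ x in (0:ℝ)..z, x ^ ((m : ℝ) + α) * Real.exp (-x) := by
    intro m
    have hm : (0:ℝ) ≤ m := Nat.cast_nonneg m
    have hpt : ∀ x ∈ Set.uIoc 0 (√z), x ^ (2 * ((m:ℝ) + α) + 1) * Real.exp (-x ^ 2) =
        x ^ (2 * m) * |x| ^ (2 * α + 1) * Real.exp (-x ^ 2) := by
      intro x hx
      rw [Set.uIoc_of_le (Real.sqrt_nonneg z)] at hx
      have hx0 := hx.1
      rw [abs_of_pos hx0, ← Real.rpow_natCast x (2 * m), ← Real.rpow_add hx0]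
      push_cast
      ring_nf
    have i0 : IntervalIntegrable
        (fun x : ℝ => x ^ (2 * ((m:ℝ) + α) + 1) * Real.exp (-x ^ 2)) volume 0 (√z) :=
      (intervalIntegral.intervalIntegrable_rpow' (by linarith)).mul_continuousOn (by fun_prop)
    have i1 : IntervalIntegrable
        (fun x : ℝ => x ^ (2 * m) * |x| ^ (2 * α + 1) * Real.exp (-x ^ 2)) volume 0 (√z) :=
      i0.congr hpt
    have i2 : IntervalIntegrable
        (fun x : ℝ => x ^ (2 * m) * |x| ^ (2 * α + 1) * Real.exp (-x ^ 2)) volume (-√z) 0 := by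
      have := (IntervalIntegrable.iff_comp_neg).1 i1
      simp only [abs_neg, Even.neg_pow (even_two_mul m), even_two, Even.neg_pow, neg_zero] at this
      exact this.symm
    have e1 := intervalIntegral.integral_comp_neg (a := 0) (b := √z)
      (fun x : ℝ => x ^ (2 * m) * |x| ^ (2 * α + 1) * Real.exp (-x ^ 2))
    simp only [abs_neg, Even.neg_pow (even_two_mul m), even_two, Even.neg_pow, neg_zero] at e1
    rw [hh, ← intervalIntegral.integral_add_adjacent_intervals i2 i1, ← e1,
      ← tgh_half _ z hz, intervalIntegral.integral_const_mul,
      intervalIntegral.integral_congr_ae (Filter.Eventually.of_forall hpt)]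
    ring
  have hrec : ∀ m : ℕ, h (2 * (m + 1)) =
      ((m:ℝ) + α + 1) * h (2 * m) - z ^ ((m:ℝ) + α + 1) * Real.exp (-z) := by
    intro m
    have hm : (0:ℝ) ≤ m := Nat.cast_nonneg m
    rw [heven, heven, ← tgh_rec _ z (by linarith) hz]
    push_cast
    rw [add_right_comm]
  refine ⟨hodd, heven, fun n => ?_, ?_⟩
  · have h1 := hrec n
    have h2 := hrec (n + 1)
    have h3 : z ^ (((n + 1 : ℕ):ℝ) + α + 1) = z ^ ((n:ℝ) + α + 1) * z := by
      rw [← Real.rpow_add_one hz.ne']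
      push_cast
      ring_nf
    rw [h3] at h2
    rw [show 2 * n + 4 = 2 * (n + 1 + 1) by ring, show 2 * n + 2 = 2 * (n + 1) by ring]
    push_cast at h2
    rw [h2]
    linear_combination (-z) * h1
  · simpa using hrec 0
end

section
/- For every real polynomial p, the truncated Laguerre functional satisfies ⟨ℓ, x·p′(x)⟩ = p(z)·z^{α+1}·e^{−z} − (α + 1)·⟨ℓ, p⟩ + ⟨ℓ, x·p⟩. -/
open MeasureTheory intervalIntegral

/-- For every real polynomial `p`, the truncated Laguerre functional satisfies
`⟨ℓ, x·p′(x)⟩ = p(z)·z^{α+1}·e^{−z} − (α+1)·⟨ℓ, p⟩ + ⟨ℓ, x·p⟩`. -/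
theorem truncated_laguerre_xDx (α z : ℝ) (hα : -1 < α) (hz : 0 < z) (p : Polynomial ℝ) :
    (∫ x in (0:ℝ)..z, x * (Polynomial.derivative p).eval x * x ^ α * Real.exp (-x)) =
      p.eval z * z ^ (α + 1) * Real.exp (-z)
        - (α + 1) * (∫ x in (0:ℝ)..z, p.eval x * x ^ α * Real.exp (-x))
        + (∫ x in (0:ℝ)..z, x * p.eval x * x ^ α * Real.exp (-x)) := by
  have key : ∀ g : ℝ → ℝ, Continuous g →
      IntervalIntegrable (fun x => g x * x ^ α * Real.exp (-x)) volume 0 z := by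
    intro g hg
    have h := (intervalIntegral.intervalIntegrable_rpow' (a := 0) (b := z) hα).mul_continuousOn
      (g := fun x => g x * Real.exp (-x)) (by fun_prop)
    refine h.congr (fun x _ => ?_)
    ring
  have h1 := key (fun x => x * (Polynomial.derivative p).eval x) (by fun_prop)
  have h2 := key (fun x => p.eval x) (by fun_prop)
  have h3 := key (fun x => x * p.eval x) (by fun_prop)
  have hF := intervalIntegral.integral_eq_sub_of_hasDerivAt_of_le hz.le
    (f := fun x => p.eval x * x ^ (α + 1) * Real.exp (-x))
    (f' := fun x => x * (Polynomial.derivative p).eval x * x ^ α * Real.exp (-x)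
      + (α + 1) * (p.eval x * x ^ α * Real.exp (-x)) - x * p.eval x * x ^ α * Real.exp (-x))
    (by
      have : Continuous (fun x : ℝ => x ^ (α + 1)) :=
        Real.continuous_rpow_const (by linarith)
      exact Continuous.continuousOn (by fun_prop))
    (by
      intro x hx
      have hx0 : 0 < x := hx.1
      have hr := Real.hasDerivAt_rpow_const (x := x) (p := α + 1) (Or.inl hx0.ne')
      have he := (hasDerivAt_id x).neg.exp
      have := ((p.hasDerivAt x).mul hr).mul he
      refine this.congr_deriv ?_
      simp only [Pi.mul_apply, Pi.neg_apply, id, add_sub_cancel_right, Real.rpow_add_one hx0.ne']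
      ring)
    ((h1.add (h2.const_mul (α + 1))).sub h3)
  rw [intervalIntegral.integral_sub (h1.add (h2.const_mul (α + 1))) h3,
    intervalIntegral.integral_add h1 (h2.const_mul (α + 1)),
    intervalIntegral.integral_const_mul, Real.zero_rpow (by linarith)] at hF
  linarith
end

section
/- For every n ≥ 1, the recurrence coefficients of the truncated Laguerre polynomials satisfy the first Laguerre–Freud equation a_{n+1} − a_{n−1} + b_n² − b_{n−1}² + (z + α + 2n)·(b_{n−1} − b_n) − 2·(b_{n−1} + b_n) + 2z = 0. -/
open MeasureTheory intervalIntegral Polynomial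

namespace TLag

lemma integrable_w (α z : ℝ) (hα : -1 < α) (p : Polynomial ℝ) :
    IntervalIntegrable (fun x : ℝ => p.eval x * x ^ α * Real.exp (-x)) volume 0 z := by
  have h := (intervalIntegral.intervalIntegrable_rpow' (a := 0) (b := z) hα).continuousOn_mul
    (g := fun x : ℝ => p.eval x * Real.exp (-x)) (by fun_prop)
  refine h.congr ?_
  intro x _
  simp only
  ring

/-- the functional -/
noncomputable def L (α z : ℝ) (p : Polynomial ℝ) : ℝ :=
  ∫ x in (0:ℝ)..z, p.eval x * x ^ α * Real.exp (-x)

lemma L_add (α z : ℝ) (hα : -1 < α) (p q : Polynomial ℝ) :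
    L α z (p + q) = L α z p + L α z q := by
  unfold L
  rw [← intervalIntegral.integral_add (integrable_w α z hα p) (integrable_w α z hα q)]
  congr 1
  funext x
  simp only [eval_add]
  ring

lemma L_C (α z : ℝ) (c : ℝ) (p : Polynomial ℝ) :
    L α z (C c * p) = c * L α z p := by
  unfold L
  rw [← intervalIntegral.integral_const_mul]
  congr 1
  funext x
  simp only [eval_mul, eval_C]
  ring

lemma L_pearson (α z : ℝ) (hα : -1 < α) (hz : 0 < z) (p : Polynomial ℝ) :
    L α z (X * (C z - X) * derivative p + (X ^ 2 - C (2 + α + z) * X + C (z * (1 + α))) * p)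
      = 0 := by
  have hc : ContinuousOn (fun x : ℝ => p.eval x * (z - x) * x ^ (α + 1) * Real.exp (-x))
      (Set.Icc 0 z) := by
    have h1 : Continuous (fun x : ℝ => x ^ (α + 1)) :=
      Real.continuous_rpow_const (by linarith)
    have h2 : Continuous (fun x : ℝ => p.eval x * (z - x) * x ^ (α + 1) * Real.exp (-x)) := by
      fun_prop
    exact h2.continuousOn
  have key := intervalIntegral.integral_eq_sub_of_hasDerivAt_of_le hz.le hc
    (f' := fun x : ℝ => (X * (C z - X) * derivative p +
      (X ^ 2 - C (2 + α + z) * X + C (z * (1 + α))) * p).eval x * x ^ α * Real.exp (-x))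
    (by
      intro x hx
      have hx0 : 0 < x := hx.1
      have h1 := p.hasDerivAt x
      have h2 : HasDerivAt (fun x : ℝ => z - x) (-1) x := by
        simpa using (hasDerivAt_id x).const_sub z
      have h3 : HasDerivAt (fun x : ℝ => x ^ (α + 1)) ((α + 1) * x ^ α) x := by
        have := Real.hasDerivAt_rpow_const (x := x) (p := α + 1) (Or.inl hx0.ne')
        simpa using this
      have h4 : HasDerivAt (fun x : ℝ => Real.exp (-x)) (Real.exp (-x) * (-1)) x :=
        (hasDerivAt_neg x).exp
      have h := ((h1.mul h2).mul h3).mul h4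
      refine h.congr_deriv ?_
      have e : x ^ (α + 1) = x ^ α * x := by
        rw [Real.rpow_add hx0, Real.rpow_one]
      simp only [Pi.mul_apply, eval_add, eval_mul, eval_sub, eval_pow, eval_X, eval_C, e]
      ring)
    (integrable_w α z hα _)
  unfold L
  rw [key]
  have : (0:ℝ) ^ (α + 1) = 0 := Real.zero_rpow (by linarith)
  simp [this]

lemma L_sq_ne (α z : ℝ) (hα : -1 < α) (hz : 0 < z) (p : Polynomial ℝ) (hp : p ≠ 0) :
    L α z (p * p) ≠ 0 := by
  apply ne_of_gt
  unfold L
  rw [intervalIntegral.integral_pos_iff_support_of_nonneg_ae' ?_ (integrable_w α z hα _)]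
  · refine ⟨hz, ?_⟩
    have hfin : ((p.roots.toFinset : Set ℝ)).Finite := Finset.finite_toSet _
    have hsub : Set.Ioc 0 z \ (p.roots.toFinset : Set ℝ) ⊆
        (Function.support fun x : ℝ => (p * p).eval x * x ^ α * Real.exp (-x)) ∩ Set.Ioc 0 z := by
      intro x hx
      refine ⟨?_, hx.1⟩
      have hr : p.eval x ≠ 0 := by
        intro h
        apply hx.2
        simp [hp, h]
      have : x ^ α ≠ 0 := (Real.rpow_pos_of_pos hx.1.1 α).ne'
      simp only [Function.mem_support, eval_mul]
      exact mul_ne_zero (mul_ne_zero (mul_ne_zero hr hr) this) (Real.exp_pos _).ne'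
    refine lt_of_lt_of_le ?_ (measure_mono hsub)
    rw [measure_sdiff_null (hfin.measure_zero _)]
    simp [hz]
  · rw [Set.uIoc_of_le hz.le]
    refine (ae_restrict_iff' measurableSet_Ioc).2 (Filter.Eventually.of_forall ?_)
    intro x hx
    simp only [eval_mul, Pi.zero_apply]
    have : 0 ≤ x ^ α := (Real.rpow_pos_of_pos hx.1 α).le
    exact mul_nonneg (mul_nonneg (mul_self_nonneg _) this) (Real.exp_pos _).le

section
variable {α z : ℝ} {P : ℕ → Polynomial ℝ}

lemma coeff_self (hm : ∀ n, (P n).Monic) (hd : ∀ n, (P n).natDegree = n) (n : ℕ) :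
    (P n).coeff n = 1 := by
  have := hm n
  rwa [Monic, leadingCoeff, hd] at this

lemma coeff_gt (hd : ∀ n, (P n).natDegree = n) {n k : ℕ} (h : n < k) :
    (P n).coeff k = 0 :=
  coeff_eq_zero_of_natDegree_lt (by rw [hd]; exact h)

lemma L_low (hα : -1 < α) (hm : ∀ n, (P n).Monic) (hd : ∀ n, (P n).natDegree = n)
    (ho : ∀ m n, m ≠ n → L α z (P m * P n) = 0) (n : ℕ) :
    ∀ k, k ≤ n → ∀ q : Polynomial ℝ, (∀ j, k ≤ j → q.coeff j = 0) → L α z (q * P n) = 0 := by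
  intro k
  induction k with
  | zero =>
    intro _ q hq
    have : q = 0 := by ext j; simp [hq j (Nat.zero_le _)]
    subst this
    simp [L]
  | succ k ih =>
    intro hk q hq
    have h1 := ih (by omega) (q - C (q.coeff k) * P k) (by
      intro j hj
      rcases Nat.eq_or_lt_of_le hj with h | h
      · subst h
        simp [coeff_self hm hd]
      · simp [hq j h, coeff_gt hd h])
    have h2 : q * P n = (q - C (q.coeff k) * P k) * P n + C (q.coeff k) * (P k * P n) := by ring
    rw [h2, L_add α z hα, L_C, h1, ho k n (by omega)]
    simp

lemma L_deg (hα : -1 < α) (hm : ∀ n, (P n).Monic) (hd : ∀ n, (P n).natDegree = n)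
    (ho : ∀ m n, m ≠ n → L α z (P m * P n) = 0) (n : ℕ)
    (q : Polynomial ℝ) (hq : ∀ j, n < j → q.coeff j = 0) :
    L α z (q * P n) = q.coeff n * L α z (P n * P n) := by
  have h1 := L_low hα hm hd ho n n le_rfl (q - C (q.coeff n) * P n) (by
      intro j hj
      rcases Nat.eq_or_lt_of_le hj with h | h
      · subst h
        simp [coeff_self hm hd]
      · simp [hq j h, coeff_gt hd h])
  have h2 : q * P n = (q - C (q.coeff n) * P n) * P n + C (q.coeff n) * (P n * P n) := by ring
  rw [h2, L_add α z hα, L_C, h1]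
  simp

lemma E (hα : -1 < α) (hz : 0 < z) (hm : ∀ n, (P n).Monic) (hd : ∀ n, (P n).natDegree = n)
    (ho : ∀ m n, m ≠ n → L α z (P m * P n) = 0) (a b : ℕ → ℝ) (n : ℕ) (Q : Polynomial ℝ)
    (hQd : ∀ j, n ≤ j → Q.coeff j = 0)
    (hQ : a n * (X * Q).coeff n = a n)
    (h0 : X * P n = P (n + 1) + C (b n) * P n + C (a n) * Q)
    (h1 : X * P (n + 1) = P (n + 2) + C (b (n + 1)) * P (n + 1) + C (a (n + 1)) * P n) :
    2 * (z * n + (X * P n).coeff n - n * b n) + a (n + 1) + a n + b n ^ 2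
      - (2 + α + z) * b n + z * (1 + α) = 0 := by
  have hh := L_sq_ne α z hα hz (P n) (hm n).ne_zero
  have pe := L_pearson α z hα hz (P n * P n)
  set h := L α z (P n * P n) with hdef
  -- L (X P P)
  have e1 : L α z (X * P n * P n) = b n * h := by
    have : X * P n * P n = P (n + 1) * P n + (C (b n) * (P n * P n) + C (a n) * (Q * P n)) := by
      rw [h0]; ring
    rw [this, L_add α z hα, L_add α z hα, L_C, L_C, ho _ _ (by omega),
      L_low hα hm hd ho n n le_rfl Q hQd]
    ring
  have e2 : L α z (X * P (n + 1) * P n) = a (n + 1) * h := by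
    have : X * P (n + 1) * P n = P (n + 2) * P n + (C (b (n + 1)) * (P (n + 1) * P n)
        + C (a (n + 1)) * (P n * P n)) := by
      rw [h1]; ring
    rw [this, L_add α z hα, L_add α z hα, L_C, L_C, ho _ _ (by omega), ho _ _ (by omega)]
    ring
  have e3 : a n * L α z (X * Q * P n) = a n * h := by
    rw [L_deg hα hm hd ho n (X * Q), ← mul_assoc, hQ]
    intro j hj
    obtain ⟨k, rfl⟩ : ∃ k, j = k + 1 := ⟨j - 1, by omega⟩
    rw [coeff_X_mul]
    exact hQd k (by omega)
  have e4 : L α z (X ^ 2 * P n * P n) = (a (n + 1) + b n ^ 2 + a n) * h := by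
    have : X ^ 2 * P n * P n = X * P (n + 1) * P n + (C (b n) * (X * P n * P n)
        + C (a n) * (X * Q * P n)) := by
      have : X ^ 2 * P n * P n = X * (X * P n) * P n := by ring
      rw [this]
      nth_rewrite 1 [h0]
      ring
    rw [this, L_add α z hα, L_add α z hα, L_C, L_C, e1, e2, e3]
    ring
  have hXP : ∀ k, (X * derivative (P n)).coeff k = k * (P n).coeff k := by
    intro k
    cases k with
    | zero => simp
    | succ k => rw [coeff_X_mul, coeff_derivative]; push_cast; ring
  have hT : ∀ k : ℕ, (X * derivative (P n) - C (n : ℝ) * P n).coeff k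
      = ((k : ℝ) - n) * (P n).coeff k := by
    intro k
    rw [coeff_sub, hXP, coeff_C_mul]; ring
  have e5 : L α z ((C z * (X * derivative (P n)) +
      C (-1) * (X * (X * derivative (P n) - C (n : ℝ) * P n))) * P n)
      = (z * n + (X * P n).coeff n) * h := by
    rw [L_deg hα hm hd ho n]
    · congr 1
      rw [coeff_add, coeff_C_mul, coeff_C_mul, hXP, coeff_self hm hd]
      cases hn : n with
      | zero => simp
      | succ m =>
        rw [← hn, hn, coeff_X_mul, coeff_X_mul, ← hn, hT, hn]
        push_cast
        ring
    · intro j hj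
      obtain ⟨k, rfl⟩ : ∃ k, j = k + 1 := ⟨j - 1, by omega⟩
      rw [coeff_add, coeff_C_mul, coeff_C_mul, hXP, coeff_X_mul, hT, coeff_gt hd hj]
      rcases Nat.eq_or_lt_of_le (Nat.lt_succ_iff.mp hj) with h | h
      · subst h; simp
      · rw [coeff_gt hd h]; simp
  have dec : X * (C z - X) * derivative (P n * P n) +
      (X ^ 2 - C (2 + α + z) * X + C (z * (1 + α))) * (P n * P n)
      = C 2 * ((C z * (X * derivative (P n)) +
      C (-1) * (X * (X * derivative (P n) - C (n : ℝ) * P n))) * P n)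
      + (C (-2 * n - (2 + α + z)) * (X * P n * P n) + (X ^ 2 * P n * P n
      + C (z * (1 + α)) * (P n * P n))) := by
    have c2 : (C 2 : Polynomial ℝ) = 2 := rfl
    simp only [derivative_mul, map_sub, map_add, map_mul, map_neg, map_one, c2]
    ring
  rw [dec, L_add α z hα, L_add α z hα, L_add α z hα, L_C, L_C, L_C, e1, e4, e5, ← hdef] at pe
  apply mul_right_cancel₀ hh
  rw [zero_mul, ← pe]
  ring

end

end TLag

/-- First Laguerre–Freud equation for the recurrence coefficients of the truncated
Laguerre polynomials. -/
theorem truncated_laguerre_freud_one (α z : ℝ) (hα : -1 < α) (hz : 0 < z)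
    (P : ℕ → Polynomial ℝ)
    (hP_monic : ∀ n, (P n).Monic)
    (hP_deg : ∀ n, (P n).natDegree = n)
    (hP_orth : ∀ m n, m ≠ n →
      ∫ x in (0:ℝ)..z, (P m).eval x * (P n).eval x * x ^ α * Real.exp (-x) = 0)
    (a b : ℕ → ℝ)
    (ha0 : a 0 = 0)
    (hrec0 : Polynomial.X * P 0 = P 1 + Polynomial.C (b 0) * P 0)
    (hrec : ∀ n, 1 ≤ n →
      Polynomial.X * P n = P (n + 1) + Polynomial.C (b n) * P n + Polynomial.C (a n) * P (n - 1)) :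
    ∀ n : ℕ, 1 ≤ n →
      a (n + 1) - a (n - 1) + (b n) ^ 2 - (b (n - 1)) ^ 2
        + (z + α + 2 * (n : ℝ)) * (b (n - 1) - b n)
        - 2 * (b (n - 1) + b n) + 2 * z = 0 := by
  have ho : ∀ m n, m ≠ n → TLag.L α z (P m * P n) = 0 := by
    intro m n h
    have := hP_orth m n h
    simpa only [TLag.L, eval_mul] using this
  have hE : ∀ n : ℕ, 2 * (z * n + (X * P n).coeff n - n * b n) + a (n + 1) + a n + b n ^ 2
      - (2 + α + z) * b n + z * (1 + α) = 0 := by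
    intro n
    cases n with
    | zero =>
      exact TLag.E hα hz hP_monic hP_deg ho a b 0 0 (by simp) (by simp [ha0])
        (by rw [hrec0]; simp) (hrec 1 le_rfl)
    | succ m =>
      refine TLag.E hα hz hP_monic hP_deg ho a b (m + 1) (P m) ?_ ?_
        (hrec (m + 1) (by omega)) (hrec (m + 2) (by omega))
      · intro j hj
        exact TLag.coeff_gt hP_deg (by omega)
      · rw [coeff_X_mul, TLag.coeff_self hP_monic hP_deg, mul_one]
  intro n hn
  obtain ⟨m, rfl⟩ : ∃ m, n = m + 1 := ⟨n - 1, by omega⟩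
  have hs : (X * P m).coeff m = (X * P (m + 1)).coeff (m + 1) + b m := by
    rw [coeff_X_mul]
    cases m with
    | zero =>
      rw [hrec0]
      simp [TLag.coeff_self hP_monic hP_deg]
    | succ k =>
      rw [hrec (k + 1) (by omega)]
      simp [TLag.coeff_self hP_monic hP_deg, TLag.coeff_gt hP_deg (Nat.lt_succ_self k)]
  have h1 := hE m
  have h2 := hE (m + 1)
  simp only [Nat.add_sub_cancel]
  push_cast at h2 ⊢
  linear_combination h2 - h1 + 2 * hs
end

section
/- For every n ≥ 1, the recurrence coefficients of the truncated Laguerre polynomials satisfy the second Laguerre–Freud equation (2n − b_n + z + α + 2)·(a_{n+1} − a_n) + (1 − b_{n+1})·a_{n+1} + (3 + b_{n−1})·a_n + b_n² − z·b_n = 0. -/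
open MeasureTheory intervalIntegral Polynomial

lemma tl_integrable (α z : ℝ) (hα : -1 < α) (p : ℝ[X]) :
    IntervalIntegrable (fun x : ℝ => p.eval x * x ^ α * Real.exp (-x)) volume 0 z := by
  have h1 : IntervalIntegrable (fun x : ℝ => x ^ α) volume 0 z :=
    intervalIntegral.intervalIntegrable_rpow' hα
  have h2 := h1.mul_continuousOn (g := fun x : ℝ => p.eval x * Real.exp (-x))
    (by fun_prop)
  refine h2.congr ?_
  intro x _
  simp only
  ring

noncomputable def tlL (α z : ℝ) (hα : -1 < α) : ℝ[X] →ₗ[ℝ] ℝ where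
  toFun p := ∫ x in (0:ℝ)..z, p.eval x * x ^ α * Real.exp (-x)
  map_add' p q := by
    rw [← intervalIntegral.integral_add (tl_integrable α z hα p) (tl_integrable α z hα q)]
    congr 1
    ext x
    rw [eval_add]
    ring
  map_smul' c p := by
    rw [RingHom.id_apply, smul_eq_mul, ← intervalIntegral.integral_const_mul]
    congr 1
    ext x
    rw [eval_smul, smul_eq_mul]
    ring

lemma tl_pos (α z : ℝ) (hα : -1 < α) (hz : 0 < z) (p : ℝ[X]) (hp : p ≠ 0) :
    0 < tlL α z hα (p * p) := by
  change 0 < ∫ x in (0:ℝ)..z, (p * p).eval x * x ^ α * Real.exp (-x)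
  rw [intervalIntegral.integral_pos_iff_support_of_nonneg_ae' _ (tl_integrable α z hα _)]
  · refine ⟨hz, ?_⟩
    have hsub : Set.Ioo 0 z \ (p.roots.toFinset : Set ℝ) ⊆
        Function.support (fun x : ℝ => (p * p).eval x * x ^ α * Real.exp (-x)) ∩ Set.Ioc 0 z := by
      rintro x ⟨⟨hx0, hxz⟩, hr⟩
      refine ⟨?_, hx0, hxz.le⟩
      have hpx : p.eval x ≠ 0 := by
        intro h
        apply hr
        simp [hp, h]
      have := Real.rpow_pos_of_pos hx0 α
      simp only [Function.mem_support, eval_mul]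
      have := Real.exp_pos (-x)
      positivity
    refine lt_of_lt_of_le ?_ (measure_mono hsub)
    rw [measure_sdiff_null (p.roots.toFinset.finite_toSet.measure_zero volume)]
    simp [hz]
  · rw [Set.uIoc_of_le hz.le]
    filter_upwards [ae_restrict_mem measurableSet_Ioc] with x hx
    have := Real.rpow_nonneg hx.1.le α
    have := Real.exp_pos (-x)
    simp only [eval_mul, Pi.zero_apply]
    have := mul_self_nonneg (p.eval x)
    positivity

lemma tl_pearson (α z : ℝ) (hα : -1 < α) (hz : 0 < z) (q : ℝ[X]) :
    tlL α z hα ((C z * X - X * X) * derivative q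
      + (X * X - C (2 + α + z) * X + C ((1 + α) * z)) * q) = 0 := by
  change ∫ x in (0:ℝ)..z, (_ : ℝ[X]).eval x * x ^ α * Real.exp (-x) = 0
  rw [intervalIntegral.integral_eq_sub_of_hasDerivAt_of_le hz.le
    (f := fun x : ℝ => x ^ (α + 1) * ((z - x) * q.eval x * Real.exp (-x))) _ _
    (tl_integrable α z hα _)]
  · simp [Real.zero_rpow (by linarith : α + 1 ≠ 0)]
  · apply ContinuousOn.mul
    · exact (Real.continuous_rpow_const (by linarith)).continuousOn
    · fun_prop
  · intro x hx
    have h1 := Real.hasDerivAt_rpow_const (x := x) (p := α + 1) (Or.inl hx.1.ne')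
    have h2 := ((((hasDerivAt_id x).const_sub z).mul (q.hasDerivAt x)).mul
      ((hasDerivAt_id x).neg.exp))
    refine (h1.mul h2).congr_deriv ?_
    have e : x ^ (α + 1) = x ^ α * x := Real.rpow_add_one hx.1.ne' α
    simp only [eval_add, eval_mul, eval_sub, eval_X, eval_C, id, Pi.mul_apply, Pi.neg_apply,
      add_sub_cancel_right, e]
    ring

lemma tl_orth_low (L : ℝ[X] →ₗ[ℝ] ℝ) (P : ℕ → ℝ[X])
    (hm : ∀ n, (P n).Monic) (hd : ∀ n, (P n).natDegree = n)
    (ho : ∀ m n, m ≠ n → L (P m * P n) = 0) (n : ℕ) :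
    ∀ k, k ≤ n → ∀ q : ℝ[X], q.degree < k → L (q * P n) = 0 := by
  intro k
  induction k with
  | zero =>
    intro _ q hq
    have : q = 0 := by
      rw [← degree_eq_bot]
      simpa using hq
    simp [this]
  | succ k ih =>
    intro hk q hq
    have h1 : (q - C (q.coeff k) * P k).degree < k := by
      rw [degree_lt_iff_coeff_zero] at hq ⊢
      intro m hkm
      have hc : (P k).coeff k = 1 := by
        have := hm k
        rwa [Monic, leadingCoeff, hd] at this
      rcases hkm.eq_or_lt with rfl | h
      · simp [hc]
      · rw [coeff_sub, coeff_C_mul, hq m h,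
          coeff_eq_zero_of_natDegree_lt (p := P k) (by rw [hd]; exact h)]
        ring
    have h2 := ih (by omega) _ h1
    have h3 : q * P n = (q - C (q.coeff k) * P k) * P n + (q.coeff k) • (P k * P n) := by
      rw [smul_eq_C_mul]
      ring
    rw [h3, map_add, h2, map_smul, ho k n (by omega)]
    simp

noncomputable def tlc (b : ℕ → ℝ) : ℕ → ℝ
  | 0 => 0
  | n + 1 => tlc b n - b n

noncomputable def tld (a b : ℕ → ℝ) : ℕ → ℝ
  | 0 => 0
  | n + 1 => tld a b n - b n * tlc b n - a n

section
variable (P : ℕ → ℝ[X]) (hm : ∀ n, (P n).Monic) (hd : ∀ n, (P n).natDegree = n)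
  (a b : ℕ → ℝ) (ha0 : a 0 = 0)
  (hr : ∀ n, X * P n = P (n + 1) + C (b n) * P n + C (a n) * P (n - 1))

include hm hd in
lemma tl_coeff0 (n : ℕ) : (P n).coeff n = 1 := by
  have := hm n
  rwa [Monic, leadingCoeff, hd] at this

include hd in
lemma tl_coeff_gt (n k : ℕ) (h : n < k) : (P n).coeff k = 0 :=
  coeff_eq_zero_of_natDegree_lt (by rw [hd]; exact h)
end

lemma tl_coeff1 (P : ℕ → ℝ[X]) (hm : ∀ n, (P n).Monic) (hd : ∀ n, (P n).natDegree = n)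
    (a b : ℕ → ℝ) (ha0 : a 0 = 0)
    (hr : ∀ n, X * P n = P (n + 1) + C (b n) * P n + C (a n) * P (n - 1)) (n : ℕ) :
    (P (n + 1)).coeff n = tlc b (n + 1) := by
  induction n with
  | zero =>
    have h := congrArg (fun p => coeff p 0) (hr 0)
    simp only [mul_coeff_zero, coeff_X_zero, coeff_add, coeff_C_zero, ha0,
      tl_coeff0 P hm hd 0] at h
    simp only [tlc, zero_add] at h ⊢
    linarith
  | succ n ih =>
    have h := congrArg (fun p => coeff p (n + 1)) (hr (n + 1))
    simp only [coeff_X_mul, coeff_add, coeff_C_mul, tl_coeff0 P hm hd, Nat.add_sub_cancel,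
      tl_coeff_gt P hd n (n + 1) (by omega), ih] at h
    rw [tlc]
    linarith

lemma tl_coeff2 (P : ℕ → ℝ[X]) (hm : ∀ n, (P n).Monic) (hd : ∀ n, (P n).natDegree = n)
    (a b : ℕ → ℝ) (ha0 : a 0 = 0)
    (hr : ∀ n, X * P n = P (n + 1) + C (b n) * P n + C (a n) * P (n - 1)) (n : ℕ) :
    (P (n + 2)).coeff n = tld a b (n + 2) := by
  induction n with
  | zero =>
    have h := congrArg (fun p => coeff p 0) (hr 1)
    have h1 := tl_coeff1 P hm hd a b ha0 hr 0
    simp only [zero_add] at h1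
    simp only [mul_coeff_zero, coeff_X_zero, coeff_add, coeff_C_zero, Nat.sub_self,
      tl_coeff0 P hm hd 0, h1] at h
    simp only [tlc, tld, zero_add, Nat.reduceAdd, ha0] at h ⊢
    linarith
  | succ n ih =>
    have h := congrArg (fun p => coeff p (n + 1)) (hr (n + 2))
    have h1 := tl_coeff1 P hm hd a b ha0 hr (n + 1)
    have e : n + 2 - 1 = n + 1 := rfl
    simp only [coeff_X_mul, coeff_add, coeff_C_mul, e, tl_coeff0 P hm hd, ih] at h
    rw [show (P (n + 2)).coeff (n + 1) = tlc b (n + 2) from h1] at h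
    rw [show n + 1 + 2 = (n + 2) + 1 from rfl, tld]
    linarith

lemma tl_coeff_XD (p : ℝ[X]) (k : ℕ) : (X * derivative p).coeff k = k * p.coeff k := by
  cases k with
  | zero => simp
  | succ k => rw [coeff_X_mul, coeff_derivative]; push_cast; ring

lemma tl_B (α z : ℝ) (L : ℝ[X] →ₗ[ℝ] ℝ) (P : ℕ → ℝ[X]) (hm : ∀ n, (P n).Monic)
    (hd : ∀ n, (P n).natDegree = n)
    (ho : ∀ m n, m ≠ n → L (P m * P n) = 0)
    (hpos : ∀ n, 0 < L (P n * P n))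
    (hL : ∀ q : ℝ[X], L ((C z * X - X * X) * derivative q
      + (X * X - C (2 + α + z) * X + C ((1 + α) * z)) * q) = 0)
    (a b : ℕ → ℝ) (ha0 : a 0 = 0)
    (hr : ∀ n, X * P n = P (n + 1) + C (b n) * P n + C (a n) * P (n - 1)) (m : ℕ) :
    - z * tlc b (m + 1) + 2 * tld a b (m + 1) - (m + 1) * a (m + 1) - (tlc b (m + 1)) ^ 2
      + a (m + 1) * (- m + b (m + 1) + b m - 2 - α - z) = 0 := by
  set c := tlc b (m + 1) with hc
  set d := tld a b (m + 1) with hdd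
  set e : ℝ := z * (m + 1) + c - (m + 1) * b (m + 1) with he
  set f : ℝ := - z * c + 2 * d - (m + 1) * a (m + 1) - c ^ 2 with hf
  have c0 := tl_coeff0 P hm hd
  have cg := tl_coeff_gt P hd
  have c1 := tl_coeff1 P hm hd a b ha0 hr
  have c2 := tl_coeff2 P hm hd a b ha0 hr
  have exp1 : ∀ p : ℝ[X], (C z * X - X * X) * derivative p
      = C z * (X * derivative p) - X * (X * derivative p) := fun p => by ring
  -- first expansion
  have hQ1 : L (((C z * X - X * X) * derivative (P (m + 1)) + C ((m : ℝ) + 1) * P (m + 2)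
      - C e * P (m + 1) - C f * P m) * P m) = 0 := by
    refine tl_orth_low L P hm hd ho m m le_rfl _ ?_
    rw [degree_lt_iff_coeff_zero]
    intro k hk
    simp only [exp1, coeff_sub, coeff_add, coeff_C_mul, tl_coeff_XD]
    rcases hk.eq_or_lt with rfl | hk
    · have hx : (X * (X * derivative (P (m + 1)))).coeff m = ((m : ℝ) - 1) * d := by
        cases m with
        | zero => simp [hdd, tld, tlc, ha0]
        | succ k =>
          rw [coeff_X_mul, tl_coeff_XD, c2 k]
          push_cast
          ring
      rw [hx, c1, c2, c0, show tld a b (m + 2) = d - b (m + 1) * c - a (m + 1) from rfl, ← hc]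
      rw [hf, he]
      ring
    · obtain ⟨k, rfl⟩ : ∃ j, k = j + 1 := ⟨k - 1, by omega⟩
      rw [coeff_X_mul, tl_coeff_XD]
      rcases (Nat.lt_succ_iff.mp hk).eq_or_lt with rfl | hk
      · rw [c1, show (P (m + 2)).coeff (m + 1) = tlc b (m + 2) from c1 (m + 1), c0,
          cg m (m + 1) (by omega), show tlc b (m + 2) = c - b (m + 1) from rfl, ← hc, he]
        push_cast
        ring
      · rcases (Nat.succ_le_iff.mpr hk).eq_or_lt with rfl | hk
        · rw [cg (m + 1) _ (by omega), cg m _ (by omega), c0, c0]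
          push_cast
          ring
        · rw [cg (m + 1) _ (by omega), cg m _ (by omega), cg (m + 1) _ (by omega),
            cg (m + 2) _ (by omega)]
          ring
  have hQ2 : L (((C z * X - X * X) * derivative (P m) + C (m : ℝ) * P (m + 1)) * P (m + 1))
      = 0 := by
    refine tl_orth_low L P hm hd ho (m + 1) (m + 1) le_rfl _ ?_
    rw [degree_lt_iff_coeff_zero]
    intro k hk
    obtain ⟨k, rfl⟩ : ∃ j, k = j + 1 := ⟨k - 1, by omega⟩
    simp only [exp1, coeff_sub, coeff_add, coeff_C_mul, tl_coeff_XD]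
    rw [coeff_X_mul, tl_coeff_XD]
    rcases (Nat.le_of_succ_le_succ hk).eq_or_lt with rfl | hk
    · rw [c0, c0, cg m (m + 1) (by omega)]
      ring
    · rw [cg m _ (by omega), cg m _ (by omega), cg (m + 1) _ (by omega)]
      ring
  set h := L (P m * P m) with hh
  set h' := L (P (m + 1) * P (m + 1)) with hh'
  have r0 := hr m
  have r1 := hr (m + 1)
  rw [Nat.add_sub_cancel] at r1
  have hz0 : ∀ i j, i ≠ j → L (P i * P j) = 0 := ho
  have ham : a m * L (P (m - 1) * P m) = 0 := by
    rcases Nat.eq_zero_or_pos m with rfl | hmp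
    · simp [ha0]
    · rw [ho _ _ (by omega), mul_zero]
  -- ratio of norms
  have hX1 : L (X * P (m + 1) * P m) = a (m + 1) * h := by
    have : X * P (m + 1) * P m = P (m + 2) * P m + b (m + 1) • (P (m + 1) * P m)
        + a (m + 1) • (P m * P m) := by
      rw [r1]; simp only [smul_eq_C_mul]; ring
    rw [this]
    simp only [map_add, map_smul, smul_eq_mul]
    rw [ho (m + 2) m (by omega), ho (m + 1) m (by omega)]
    ring
  have hX2 : L (X * P (m + 1) * P m) = h' := by
    have : X * P (m + 1) * P m = P (m + 1) * P (m + 1) + b m • (P m * P (m + 1))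
        + a m • (P (m - 1) * P (m + 1)) := by
      rw [show X * P (m + 1) * P m = (X * P m) * P (m + 1) by ring, r0]
      simp only [smul_eq_C_mul]; ring
    rw [this]
    simp only [map_add, map_smul, smul_eq_mul]
    rw [ho m (m + 1) (by omega), ho (m - 1) (m + 1) (by omega)]
    ring
  have hXX : L (X * X * (P (m + 1) * P m)) = (b (m + 1) + b m) * h' := by
    have : X * X * (P (m + 1) * P m) = b (m + 1) • (X * P (m + 1) * P m)
        + P (m + 2) * P (m + 1) + b m • (P (m + 2) * P m) + a m • (P (m + 2) * P (m - 1))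
        + a (m + 1) • (P (m + 1) * P m) + (a (m + 1) * b m) • (P m * P m)
        + a (m + 1) • a m • (P (m - 1) * P m) := by
      simp only [smul_eq_C_mul, C_mul]
      linear_combination (X * P m) * r1 + (P (m + 2) + C (a (m + 1)) * P m) * r0
    rw [this]
    simp only [map_add, map_smul, smul_eq_mul]
    rw [hX2, ho (m + 2) (m + 1) (by omega), ho (m + 2) m (by omega),
      ho (m + 2) (m - 1) (by omega), ho (m + 1) m (by omega), ham, ← hh]
    have : a (m + 1) * h = h' := by rw [← hX1, hX2]
    linear_combination b m * this
  have hp := hL (P (m + 1) * P m)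
  have hsplit : (C z * X - X * X) * derivative (P (m + 1) * P m)
      + (X * X - C (2 + α + z) * X + C ((1 + α) * z)) * (P (m + 1) * P m)
      = ((C z * X - X * X) * derivative (P (m + 1)) + C ((m : ℝ) + 1) * P (m + 2)
          - C e * P (m + 1) - C f * P m) * P m
        + ((C z * X - X * X) * derivative (P m) + C (m : ℝ) * P (m + 1)) * P (m + 1)
        - ((m : ℝ) + 1) • (P (m + 2) * P m) + e • (P (m + 1) * P m) + f • (P m * P m)
        - (m : ℝ) • (P (m + 1) * P (m + 1))
        + X * X * (P (m + 1) * P m) - (2 + α + z) • (X * P (m + 1) * P m)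
        + ((1 + α) * z) • (P (m + 1) * P m) := by
    rw [derivative_mul]
    simp only [smul_eq_C_mul]
    ring
  rw [hsplit] at hp
  rw [map_add, map_sub, map_add, map_sub, map_add, map_add, map_sub, map_add, hQ1, hQ2] at hp
  simp only [map_smul, smul_eq_mul] at hp
  rw [ho (m + 2) m (by omega), ho (m + 1) m (by omega), hXX, hX2, ← hh, ← hh'] at hp
  have hr' : h' = a (m + 1) * h := by rw [← hX1, hX2]
  rw [hr'] at hp
  have hne : h ≠ 0 := (hpos m).ne'
  apply mul_right_cancel₀ hne
  linear_combination hp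

theorem truncated_laguerre_freud_two (α z : ℝ) (hα : -1 < α) (hz : 0 < z)
    (P : ℕ → Polynomial ℝ)
    (hP_monic : ∀ n, (P n).Monic)
    (hP_deg : ∀ n, (P n).natDegree = n)
    (hP_orth : ∀ m n, m ≠ n →
      ∫ x in (0:ℝ)..z, (P m).eval x * (P n).eval x * x ^ α * Real.exp (-x) = 0)
    (a b : ℕ → ℝ)
    (ha0 : a 0 = 0)
    (hrec0 : Polynomial.X * P 0 = P 1 + Polynomial.C (b 0) * P 0)
    (hrec : ∀ n, 1 ≤ n →
      Polynomial.X * P n = P (n + 1) + Polynomial.C (b n) * P n + Polynomial.C (a n) * P (n - 1)) :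
    ∀ n : ℕ, 1 ≤ n →
      (2 * (n : ℝ) - b n + z + α + 2) * (a (n + 1) - a n)
        + (1 - b (n + 1)) * a (n + 1) + (3 + b (n - 1)) * a n
        + (b n) ^ 2 - z * b n = 0 := by
  intro n hn
  obtain ⟨m, rfl⟩ : ∃ m, n = m + 1 := ⟨n - 1, by omega⟩
  have hr : ∀ n, X * P n = P (n + 1) + C (b n) * P n + C (a n) * P (n - 1) := by
    intro n
    rcases Nat.eq_zero_or_pos n with rfl | h
    · rw [hrec0, ha0]; simp
    · exact hrec n h
  have ho : ∀ m n, m ≠ n → tlL α z hα (P m * P n) = 0 := by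
    intro m n h
    rw [← hP_orth m n h]
    change ∫ x in (0:ℝ)..z, (P m * P n).eval x * x ^ α * Real.exp (-x) = _
    simp only [eval_mul]
  have hB := tl_B α z (tlL α z hα) P hP_monic hP_deg ho
    (fun n => tl_pos α z hα hz _ (hP_monic n).ne_zero) (tl_pearson α z hα hz) a b ha0 hr
  have B0 := hB m
  have B1 := hB (m + 1)
  rw [show tld a b (m + 1 + 1) = tld a b (m + 1) - b (m + 1) * tlc b (m + 1) - a (m + 1) from rfl,
    show tlc b (m + 1 + 1) = tlc b (m + 1) - b (m + 1) from rfl] at B1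
  rw [Nat.add_sub_cancel]
  push_cast at B1 ⊢
  linear_combination B0 - B1
end

section
/- For every n ≥ 1, the recurrence coefficients of the truncated Laguerre polynomials satisfy the nonlinear relation (α − b_n + 2n + 1)·(α − b_{n−1} + 2n − 1)·a_n = (1/4)·[a_n − a_{n+1} − b_n·(b_n − (z + α + 2(n+1))) − (1 + α + 2n)·z]². -/
open MeasureTheory intervalIntegral Polynomial

namespace TL

noncomputable def w (α : ℝ) (x : ℝ) : ℝ := x ^ α * Real.exp (-x)

lemma w_int (α z : ℝ) (hα : -1 < α) (p : ℝ[X]) :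
    IntervalIntegrable (fun x => p.eval x * w α x) volume 0 z := by
  have h1 : IntervalIntegrable (fun x : ℝ => x ^ α) volume 0 z := intervalIntegrable_rpow' hα
  have h2 := h1.mul_continuousOn (g := fun x => Real.exp (-x) * p.eval x)
    (by fun_prop)
  refine h2.congr ?_
  intro x _
  simp only [w]
  ring

noncomputable def L (α z : ℝ) (p : ℝ[X]) : ℝ := ∫ x in (0:ℝ)..z, p.eval x * w α x

lemma L_add (α z : ℝ) (hα : -1 < α) (p q : ℝ[X]) : L α z (p + q) = L α z p + L α z q := by
  unfold L
  rw [← intervalIntegral.integral_add (w_int α z hα p) (w_int α z hα q)]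
  congr 1; ext x; simp; ring

lemma L_C (α z : ℝ) (c : ℝ) (p : ℝ[X]) : L α z (C c * p) = c * L α z p := by
  unfold L
  rw [← intervalIntegral.integral_const_mul]
  congr 1; ext x; simp; ring

lemma L_parts (α z : ℝ) (hα : -1 < α) (hz : 0 < z) (p : ℝ[X]) :
    L α z (C (α + 1) * p + C (-1) * (X * p) + X * derivative p) = z * w α z * p.eval z := by
  have key := intervalIntegral.integral_eq_sub_of_hasDerivAt_of_le (a := 0) (b := z) hz.le
    (f := fun x => p.eval x * x ^ (α + 1) * Real.exp (-x))
    (f' := fun x => (C (α + 1) * p + C (-1) * (X * p) + X * derivative p).eval x * w α x)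
    ?_ ?_ (w_int α z hα _)
  · unfold L
    rw [key, Real.zero_rpow (by linarith), Real.rpow_add hz, Real.rpow_one]
    simp only [w]; ring
  · have : Continuous (fun x : ℝ => x ^ (α + 1)) := Real.continuous_rpow_const (by linarith)
    fun_prop
  · intro x hx
    have h1 : HasDerivAt (fun x : ℝ => x ^ (α + 1)) ((α + 1) * x ^ (α + 1 - 1)) x :=
      Real.hasDerivAt_rpow_const (Or.inl hx.1.ne')
    have h2 : HasDerivAt (fun x : ℝ => Real.exp (-x)) (Real.exp (-x) * (-1)) x :=
      (hasDerivAt_neg x).exp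
    have h3 := ((p.hasDerivAt x).mul h1).mul h2
    refine h3.congr_deriv ?_
    have e : x ^ (α + 1) = x ^ α * x := by rw [Real.rpow_add hx.1, Real.rpow_one]
    simp only [add_sub_cancel_right, w, Pi.mul_apply, e]
    simp
    ring

lemma L_pos (α z : ℝ) (hα : -1 < α) (hz : 0 < z) (p : ℝ[X]) (hp : p ≠ 0) :
    0 < L α z (p * p) := by
  unfold L
  rw [intervalIntegral.integral_pos_iff_support_of_nonneg_ae' _ (w_int α z hα _)]
  · refine ⟨hz, ?_⟩
    have hfin : volume {x | p.IsRoot x} = 0 :=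
      (Polynomial.finite_setOfPred_isRoot hp).measure_zero _
    have : 0 < volume (Set.Ioc 0 z \ {x | p.IsRoot x}) := by
      rw [measure_sdiff_null hfin]; simpa using hz
    refine this.trans_le (measure_mono ?_)
    rintro x ⟨hx, hr⟩
    refine ⟨?_, hx⟩
    have h1 := Real.rpow_pos_of_pos hx.1 α
    have h2 := Real.exp_pos (-x)
    have h3 : p.eval x ≠ 0 := hr
    simp only [Function.mem_support, w, eval_mul]
    positivity
  · rw [Set.uIoc_of_le hz.le]
    filter_upwards [ae_restrict_mem measurableSet_Ioc] with x hx
    have h1 := Real.rpow_pos_of_pos hx.1 α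
    simp only [w, eval_mul, Pi.zero_apply]
    have := mul_self_nonneg (p.eval x)
    positivity

section
variable (α z : ℝ) (hα : -1 < α) (P : ℕ → ℝ[X])
    (hP_monic : ∀ n, (P n).Monic)
    (hP_deg : ∀ n, (P n).natDegree = n)
    (hP_orth : ∀ m n, m ≠ n → L α z (P m * P n) = 0)

include hα hP_monic hP_deg hP_orth

lemma orth_low (n : ℕ) (k : ℕ) (hk : k ≤ n) (q : ℝ[X]) (hq : ∀ m, k ≤ m → q.coeff m = 0) :
    L α z (P n * q) = 0 := by
  induction k generalizing q with
  | zero =>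
    have : q = 0 := by ext m; simpa using hq m (Nat.zero_le _)
    subst this
    simp [L]
  | succ k ih =>
    have hc : (P k).coeff k = 1 := by
      have := (hP_monic k).coeff_natDegree
      rwa [hP_deg] at this
    have h := ih (by omega) (q + C (-(q.coeff k)) * P k) ?_
    · have e : P n * (q + C (-(q.coeff k)) * P k) = P n * q + C (-(q.coeff k)) * (P n * P k) := by
        ring
      rw [e, L_add α z hα, L_C, hP_orth n k (by omega)] at h
      linarith
    · intro m hm
      rcases hm.eq_or_lt with rfl | hm
      · simp only [coeff_add, coeff_C_mul, hc]; ring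
      · rw [coeff_add, coeff_C_mul, hq m hm,
          coeff_eq_zero_of_natDegree_lt (p := P k) (by rw [hP_deg]; exact hm)]
        ring

lemma orth_top (n : ℕ) (q : ℝ[X]) (hq : ∀ m, n < m → q.coeff m = 0) :
    L α z (P n * q) = q.coeff n * L α z (P n * P n) := by
  have hc : (P n).coeff n = 1 := by
    have := (hP_monic n).coeff_natDegree
    rwa [hP_deg] at this
  have h := orth_low α z hα P hP_monic hP_deg hP_orth n n le_rfl (q + C (-(q.coeff n)) * P n) ?_
  · have e : P n * (q + C (-(q.coeff n)) * P n) = P n * q + C (-(q.coeff n)) * (P n * P n) := by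
      ring
    rw [e, L_add α z hα, L_C] at h
    linarith
  · intro m hm
    rcases hm.eq_or_lt with rfl | hm
    · simp only [coeff_add, coeff_C_mul, hc]; ring
    · rw [coeff_add, coeff_C_mul, hq m hm,
        coeff_eq_zero_of_natDegree_lt (p := P n) (by rw [hP_deg]; exact hm)]
      ring

end

lemma coeff_X_der (p : ℝ[X]) (m : ℕ) : (X * derivative p).coeff m = m * p.coeff m := by
  cases m with
  | zero => simp
  | succ m => rw [coeff_X_mul, coeff_derivative]; push_cast; ring

end TL

open TL in
/-- Nonlinear relation for the recurrence coefficients of the truncated Laguerre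
polynomials (Theorem 4.4). -/
theorem truncated_laguerre_nonlinear (α z : ℝ) (hα : -1 < α) (hz : 0 < z)
    (P : ℕ → Polynomial ℝ)
    (hP_monic : ∀ n, (P n).Monic)
    (hP_deg : ∀ n, (P n).natDegree = n)
    (hP_orth : ∀ m n, m ≠ n →
      ∫ x in (0:ℝ)..z, (P m).eval x * (P n).eval x * x ^ α * Real.exp (-x) = 0)
    (a b : ℕ → ℝ)
    (ha0 : a 0 = 0)
    (hrec0 : Polynomial.X * P 0 = P 1 + Polynomial.C (b 0) * P 0)
    (hrec : ∀ n, 1 ≤ n →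
      Polynomial.X * P n = P (n + 1) + Polynomial.C (b n) * P n + Polynomial.C (a n) * P (n - 1)) :
    ∀ n : ℕ, 1 ≤ n →
      (α - b n + 2 * (n : ℝ) + 1) * (α - b (n - 1) + 2 * (n : ℝ) - 1) * a n =
        (1 / 4) * (a n - a (n + 1)
          - b n * (b n - (z + α + 2 * ((n : ℝ) + 1))) - (1 + α + 2 * (n : ℝ)) * z) ^ 2 := by
  have orth : ∀ m n, m ≠ n → L α z (P m * P n) = 0 := by
    intro m n hmn
    rw [← hP_orth m n hmn]
    unfold L
    congr 1; ext x; simp only [w, eval_mul]; ring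
  have top := orth_top α z hα P hP_monic hP_deg orth
  have low := orth_low α z hα P hP_monic hP_deg orth
  have hc : ∀ n, (P n).coeff n = 1 := fun n => by
    have := (hP_monic n).coeff_natDegree
    rwa [hP_deg] at this
  have hc0 : ∀ n m, n < m → (P n).coeff m = 0 := fun n m h =>
    coeff_eq_zero_of_natDegree_lt (by rw [hP_deg]; exact h)
  set h : ℕ → ℝ := fun n => L α z (P n * P n) with hh
  have hpos : ∀ n, 0 < h n := fun n => L_pos α z hα hz _ (hP_monic n).ne_zero
  set W := z * w α z with hW
  set t : ℕ → ℝ := fun n => (P n).eval z with ht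
  -- x P_n^2
  have hb : ∀ n, L α z (X * (P n * P n)) = b n * h n := by
    intro n
    have e1 : X * (P n * P n) = P n * (X * P n) := by ring
    rw [e1]
    rcases Nat.eq_zero_or_pos n with rfl | hn
    · have e2 : P 0 * (X * P 0) = P 0 * P 1 + C (b 0) * (P 0 * P 0) := by rw [hrec0]; ring
      rw [e2, L_add α z hα, L_C, orth 0 1 (by omega), zero_add]
    · have e2 : P n * (X * P n) = P n * P (n + 1) + C (b n) * (P n * P n)
          + C (a n) * (P n * P (n - 1)) := by rw [hrec n hn]; ring
      rw [e2, L_add α z hα, L_add α z hα, L_C, L_C, orth n (n + 1) (by omega),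
        orth n (n - 1) (by omega)]
      ring
  have hxp : ∀ n, L α z (P (n + 1) * (X * P n)) = h (n + 1) := by
    intro n
    rw [top (n + 1) _ ?_, coeff_X_mul, hc, one_mul]
    intro m hm
    obtain ⟨m, rfl⟩ : ∃ k, m = k + 1 := ⟨m - 1, by omega⟩
    rw [coeff_X_mul, hc0 n m (by omega)]
  have ha : ∀ n, a (n + 1) * h n = h (n + 1) := by
    intro n
    rw [← hxp n]
    have e : P (n + 1) * (X * P n) = P n * P (n + 1 + 1) + C (b (n + 1)) * (P n * P (n + 1))
        + C (a (n + 1)) * (P n * P n) := by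
      have := hrec (n + 1) (by omega)
      rw [Nat.add_sub_cancel] at this
      linear_combination P n * this
    rw [e, L_add α z hα, L_add α z hα, L_C, L_C, orth n (n + 1) (by omega),
        orth n (n + 1 + 1) (by omega)]
    ring
  -- S
  have hS : ∀ n : ℕ, (α - b n + 2 * n + 1) * h n = W * t n ^ 2 := by
    intro n
    have k := L_parts α z hα hz (P n * P n)
    have e : X * derivative (P n * P n) = C 2 * (P n * (X * derivative (P n))) := by
      rw [derivative_mul, show (C (2:ℝ)) = 2 from rfl]; ring
    rw [e, L_add α z hα, L_add α z hα, L_C, L_C, L_C, hb,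
      top n (X * derivative (P n)) (fun m hm => by rw [coeff_X_der, hc0 n m hm, mul_zero]),
      coeff_X_der, hc, eval_mul] at k
    simp only [hh, ht, hW] at k ⊢
    linear_combination k
  have hR : ∀ n : ℕ, W * t (n + 1) * t n = - h (n + 1) - (P (n + 1)).coeff n * h n := by
    intro n
    have k := L_parts α z hα hz (P (n + 1) * P n)
    set q := X * derivative (P (n + 1)) + C (-((n : ℝ) + 1)) * P (n + 1) with hq
    have e : X * derivative (P (n + 1) * P n) = P n * q + C ((n : ℝ) + 1) * (P n * P (n + 1))
        + P (n + 1) * (X * derivative (P n)) := by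
      rw [derivative_mul, hq, C_neg]; ring
    have e2 : X * (P (n + 1) * P n) = P (n + 1) * (X * P n) := by ring
    have hqt : L α z (P n * q) = q.coeff n * h n := by
      apply top
      intro m hm
      rw [hq, coeff_add, coeff_C_mul, coeff_X_der]
      rcases (Nat.succ_le_of_lt hm).eq_or_lt with rfl | hm
      · push_cast; ring
      · rw [hc0 _ _ hm]; ring
    have hqc : q.coeff n = - (P (n + 1)).coeff n := by
      rw [hq, coeff_add, coeff_C_mul, coeff_X_der]; ring
    rw [e, e2, L_add α z hα, L_add α z hα, L_add α z hα, L_add α z hα, L_C, L_C, L_C,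
      orth (n + 1) n (by omega), orth n (n + 1) (by omega), hqt, hqc, hxp,
      low (n + 1) (n + 1) le_rfl (X * derivative (P n))
        (fun m hm => by rw [coeff_X_der, hc0 n m (by omega), mul_zero]), eval_mul] at k
    simp only [ht, hW] at k ⊢
    linear_combination -k
  intro n hn
  obtain ⟨m, rfl⟩ : ∃ k, n = k + 1 := ⟨n - 1, by omega⟩
  rw [Nat.add_sub_cancel]
  have hr := hrec (m + 1) (by omega)
  rw [Nat.add_sub_cancel] at hr
  have hs : (P (m + 1)).coeff m = (P (m + 1 + 1)).coeff (m + 1) + b (m + 1) := by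
    have := congrArg (fun p => p.coeff (m + 1)) hr
    simp only [coeff_add, coeff_C_mul, coeff_X_mul, hc, hc0 m (m + 1) (by omega)] at this
    linarith
  have hz' : z * t (m + 1) = t (m + 1 + 1) + b (m + 1) * t (m + 1) + a (m + 1) * t m := by
    have := congrArg (fun p => p.eval z) hr
    simpa using this
  have S0 := hS m
  have S1 := hS (m + 1)
  have R0 := hR m
  have R1 := hR (m + 1)
  have A0 := ha m
  have A1 := ha (m + 1)
  have p0 := hpos m
  have p1 := hpos (m + 1)
  clear_value h t W
  push_cast at *
  have key : (a (m + 1) - a (m + 1 + 1)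
          - b (m + 1) * (b (m + 1) - (z + α + 2 * ((m : ℝ) + 1 + 1)))
          - (1 + α + 2 * ((m : ℝ) + 1)) * z) * h m = -2 * (W * t (m + 1) * t m) := by
    have ne : a (m + 1) ≠ 0 := by
      intro h0; rw [h0] at A0; linarith
    apply mul_left_cancel₀ ne
    rw [← A0] at S1 R1 A1
    rw [← A1] at R1
    linear_combination (b (m + 1) - z) * S1 - W * t (m + 1) * hz' - R1 + a (m + 1) * R0
      - a (m + 1) * h m * hs + a (m + 1) * A0
  have hne : h m ^ 2 ≠ 0 := by positivity
  apply mul_left_cancel₀ hne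
  have k2 := congrArg (fun x => x ^ 2) key
  simp only [mul_pow] at k2
  have : (α - b (m + 1) + 2 * ((m : ℝ) + 1) + 1) * a (m + 1) * h m = W * t (m + 1) ^ 2 := by
    rw [← S1, ← A0]; ring
  linear_combination (α - b m + 2 * ((m : ℝ) + 1) - 1) * h m * this
    + W * t (m + 1) ^ 2 * S0 - (1 / 4) * k2
end

section
/- For every n ≥ 2, the recurrence coefficients γ_n of the truncated generalized Hermite polynomials satisfy the Laguerre–Freud equation γ_{n+1}·(γ_{n+2} + γ_{n+1} + γ_n − (α + z + n + 2)) − γ_{n−1}·(γ_{n−2} + γ_{n−1} + γ_n − (α + z + n − 1)) − γ_n + z = 0. -/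
open MeasureTheory intervalIntegral Polynomial

lemma lf_alg (α z : ℝ) (S : ℕ → Polynomial ℝ) (γ : ℕ → ℝ) (L : Polynomial ℝ →ₗ[ℝ] ℝ)
    (hS0 : S 0 = 1)
    (horth : ∀ m n, m ≠ n → L (S m * S n) = 0)
    (hpos : ∀ n, L (S n * S n) ≠ 0)
    (hγ0 : γ 0 = 0)
    (hrec : ∀ n, X * S n = S (n + 1) + C (γ n) * S (n - 1))
    (hP : ∀ p : Polynomial ℝ, L (X * (C z - X ^ 2) * derivative p
      + (C (z * (2 * α + 2)) - C (2 * α + 4 + 2 * z) * X ^ 2 + 2 * X ^ 4) * p) = 0) :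
    ∀ n : ℕ, 2 ≤ n →
      γ (n + 1) * (γ (n + 2) + γ (n + 1) + γ n - (α + z + (n : ℝ) + 2))
        - γ (n - 1) * (γ (n - 2) + γ (n - 1) + γ n - (α + z + (n : ℝ) - 1))
        - γ n + z = 0 := by
  have hC : ∀ (c : ℝ) (p : Polynomial ℝ), L (C c * p) = c * L p := by
    intro c p
    rw [← smul_eq_C_mul, map_smul, smul_eq_mul]
  obtain ⟨h, hh⟩ : ∃ h : ℕ → ℝ, ∀ n, L (S n * S n) = h n := ⟨_, fun _ => rfl⟩
  obtain ⟨A, hA⟩ : ∃ A : ℕ → ℕ → ℝ, ∀ n m, L (X * derivative (S n) * S m) = A n m :=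
    ⟨_, fun _ _ => rfl⟩
  have hg : ∀ n, h (n + 1) = γ (n + 1) * h n := by
    intro n
    have e : (S (n+1) * S (n+1)) + C (γ n) * (S (n-1) * S (n+1))
        = S (n+2) * S n + C (γ (n+1)) * (S n * S n) := by
      have h1 := hrec n
      have h2 := hrec (n+1)
      simp only [Nat.add_sub_cancel] at h2
      linear_combination (-S (n+1)) * h1 + S n * h2
    have := congrArg L e
    simp only [map_add L, hC, hh] at this
    rw [horth (n-1) (n+1) (by omega), horth (n+2) n (by omega)] at this
    linarith
  have hXS : ∀ n m, L (X * S n * S m) = L (S (n+1) * S m) + γ n * L (S (n-1) * S m) := by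
    intro n m
    rw [hrec n, add_mul, map_add L, mul_assoc, hC]
  have hArec : ∀ n m, A (n+1) m = L (X * S n * S m) + A n (m+1) + γ m * A n (m-1)
      - γ n * A (n-1) m := by
    intro n m
    have h1 := congrArg derivative (hrec n)
    simp only [derivative_mul, derivative_X, derivative_add, derivative_C] at h1
    have e : X * derivative (S (n+1)) * S m = X * S n * S m + X * derivative (S n) * S (m+1)
       + C (γ m) * (X * derivative (S n) * S (m-1)) - C (γ n) * (X * derivative (S (n-1)) * S m) := by
      linear_combination (-X * S m) * h1 + X * derivative (S n) * hrec m
    have := congrArg L e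
    simpa only [map_add L, map_sub L, hC, hA] using this
  have hA0 : ∀ m, A 0 m = 0 := by
    intro m
    rw [← hA, hS0]; simp
  have hAz : ∀ n, (∀ m, n < m → A n m = 0) ∧ A n n = n * h n := by
    intro n
    induction n using Nat.strong_induction_on with
    | _ n ih =>
      match n, ih with
      | 0, _ => simp [hA0]
      | n+1, ih =>
        obtain ⟨i1, i2⟩ := ih n (by omega)
        have i3 : ∀ m, n < m → γ n * A (n-1) m = 0 := by
          intro m hm
          rw [(ih (n-1) (by omega)).1 m (by omega), mul_zero]
        constructor
        · intro m hm
          rw [hArec, hXS, horth _ _ (by omega), horth _ _ (by omega), i1 (m+1) (by omega),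
            i1 (m-1) (by omega), i3 m (by omega)]
          ring
        · rw [hArec, hXS, hh, horth _ _ (by omega), i1 _ (by omega), i3 _ (by omega),
            Nat.add_sub_cancel, i2, hg n]
          push_cast
          ring
  have hT : ∀ k, γ k * A (k+1) (k-1) = 2 * (∑ i ∈ Finset.range (k+1), γ i) * h k := by
    intro k
    induction k with
    | zero => simp [hγ0]
    | succ k ih =>
      rw [Nat.add_sub_cancel, hArec, hXS, (hAz (k+1)).2, Nat.add_sub_cancel, ih, (hAz k).2, hh,
        horth _ _ (by omega), Finset.sum_range_succ _ (k+1), hg]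
      push_cast
      ring
  have hg2 : ∀ k, γ k * (γ k * h (k-1)) = γ k * h k := by
    intro k
    cases k with
    | zero => simp [hγ0]
    | succ k => rw [hg k]; simp
  have hX2 : ∀ k, X * (X * S (k+1)) = S (k+3) + C (γ (k+1) + γ (k+2)) * S (k+1)
      + C (γ (k+1) * γ k) * S (k-1) := by
    intro k
    have h1 := hrec (k+1)
    have h2 := hrec (k+2)
    have h3 := hrec k
    simp only [Nat.add_sub_cancel, show k + 2 - 1 = k + 1 by omega] at h1 h2
    simp only [C_add, C_mul]
    linear_combination X * h1 + h2 + C (γ (k+1)) * h3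
  have hE : ∀ k : ℕ, z * (k + 1 + α + 1) - (k + 1 + α + 2 + z) * (γ (k+1) + γ (k+2))
      - 2 * (∑ i ∈ Finset.range (k+1), γ i) + γ (k+2) * γ (k+3) + (γ (k+1) + γ (k+2))^2
      + γ (k+1) * γ k = 0 := by
    intro k
    have p1 := hP (S (k+1) * S (k+1))
    have q2 : L (X * (X * S (k+1)) * S (k+1)) = (γ (k+1) + γ (k+2)) * h (k+1) := by
      rw [hX2]
      simp only [add_mul, map_add L, mul_assoc, hC, hh]
      rw [horth _ _ (by omega), horth (k-1) _ (by omega)]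
      ring
    have q4 : L ((X * (X * S (k+1))) * (X * (X * S (k+1)))) =
        h (k+3) + (γ (k+1) + γ (k+2))^2 * h (k+1) + (γ (k+1) * γ k)^2 * h (k-1) := by
      rw [hX2]
      have e : ∀ (a b : ℝ) (P Q R : Polynomial ℝ), (P + C a * Q + C b * R) * (P + C a * Q + C b * R)
        = P * P + C (a^2) * (Q * Q) + C (b^2) * (R * R) + C (2*a) * (P * Q) + C (2*b) * (P * R)
          + C (2*a*b) * (Q * R) := by
        intro a b P Q R
        simp only [C_mul, C_pow, show (C (2:ℝ)) = 2 from rfl]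
        ring
      rw [e]
      simp only [map_add L, hC, hh]
      rw [horth (k+3) (k+1) (by omega), horth (k+3) (k-1) (by omega),
        horth (k+1) (k-1) (by omega)]
      ring
    have q3 : L (X * derivative (S (k+1)) * (X * (X * S (k+1)))) =
        (γ (k+1) + γ (k+2)) * ((k+1) * h (k+1)) + γ (k+1) * (2 * (∑ i ∈ Finset.range (k+1), γ i) * h k) := by
      have e : ∀ (a b : ℝ) (D P Q R : Polynomial ℝ), D * (P + C a * Q + C b * R)
        = D * P + C a * (D * Q) + C b * (D * R) := by
        intros; ring
      rw [hX2, e]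
      simp only [map_add L, hC, hA]
      rw [(hAz (k+1)).1 (k+3) (by omega), (hAz (k+1)).2, ← hT]
      push_cast
      ring
    have e : X * (C z - X ^ 2) * derivative (S (k+1) * S (k+1))
      + (C (z * (2 * α + 2)) - C (2 * α + 4 + 2 * z) * X ^ 2 + 2 * X ^ 4) * (S (k+1) * S (k+1))
      = C (2*z) * (X * derivative (S (k+1)) * S (k+1))
        - C 2 * (X * derivative (S (k+1)) * (X * (X * S (k+1))))
        + C (z * (2 * α + 2)) * (S (k+1) * S (k+1))
        - C (2 * α + 4 + 2 * z) * (X * (X * S (k+1)) * S (k+1))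
        + C 2 * ((X * (X * S (k+1))) * (X * (X * S (k+1)))) := by
      rw [derivative_mul, C_mul (a := 2) (b := z), show (C (2:ℝ)) = 2 from rfl]
      ring
    rw [e] at p1
    simp only [map_add L, map_sub L, hC, q2, q3, q4, hh, hA, (hAz (k+1)).2] at p1
    have g3 := hg (k+2)
    have g2 := hg (k+1)
    have g1 := hg k
    have gk := hg2 k
    have hne : h (k+1) ≠ 0 := by rw [← hh]; exact hpos _
    apply mul_left_cancel₀ hne
    push_cast at p1
    simp only [add_assoc, Nat.reduceAdd] at g3 g2 p1 ⊢
    rw [g3, g2] at p1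
    linear_combination p1 / 2 - γ (k+1)^2 * gk + (γ (k+1) * γ k + -2 * (∑ i ∈ Finset.range (k+1), γ i)) * g1
  intro n hn
  obtain ⟨k, rfl⟩ := Nat.exists_eq_add_of_le' hn
  have e1 := hE k
  have e2 := hE (k+1)
  rw [Finset.sum_range_succ] at e2
  simp only [show k + 2 - 1 = k + 1 by omega, Nat.add_sub_cancel]
  push_cast at *
  simp only [add_assoc, Nat.reduceAdd] at e1 e2 ⊢
  linear_combination e2 - e1

lemma lf_integrable (α a : ℝ) (hα : -1 < α) (ha : 0 < a) (p : Polynomial ℝ) :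
    IntervalIntegrable (fun x => p.eval x * |x| ^ (2 * α + 1) * Real.exp (-x ^ 2)) volume (-a) a := by
  have h1 : IntervalIntegrable (fun x : ℝ => |x| ^ (2 * α + 1)) volume 0 a := by
    refine (intervalIntegrable_rpow' (r := 2 * α + 1) (by linarith)).congr ?_
    intro x hx
    rw [Set.uIoc_of_le ha.le] at hx
    simp [abs_of_pos hx.1]
  have h2 : IntervalIntegrable (fun x : ℝ => |x| ^ (2 * α + 1)) volume (-a) 0 := by
    have := h1.comp_sub_left 0
    simp at this
    exact this.symm
  have h3 := (h2.trans h1).continuousOn_mul (g := fun x => p.eval x * Real.exp (-x ^ 2))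
    (by fun_prop)
  refine h3.congr ?_
  intro x _
  simp only
  ring

lemma lf_pearson (α z : ℝ) (hα : -1 < α) (hz : 0 < z) (p : Polynomial ℝ) :
    ∫ x in (-(Real.sqrt z))..(Real.sqrt z), (X * (C z - X ^ 2) * derivative p
      + (C (z * (2 * α + 2)) - C (2 * α + 4 + 2 * z) * X ^ 2 + 2 * X ^ 4) * p).eval x
        * |x| ^ (2 * α + 1) * Real.exp (-x ^ 2) = 0 := by
  have hs : 0 < Real.sqrt z := Real.sqrt_pos.2 hz
  have hG : Continuous (fun x : ℝ => x * |x| ^ (2 * α + 1)) := by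
    have : (fun x : ℝ => x * |x| ^ (2 * α + 1)) =
        fun x => if 0 ≤ x then |x| ^ (2 * α + 2) else - |x| ^ (2 * α + 2) := by
      funext x
      rcases eq_or_ne x 0 with rfl | hx
      · simp [Real.zero_rpow (show 2 * α + 2 ≠ 0 by linarith)]
      · rw [show 2 * α + 2 = 2 * α + 1 + 1 by ring, Real.rpow_add_one (abs_ne_zero.2 hx) (2 * α + 1)]
        split_ifs with h
        · have := abs_of_nonneg h
          linear_combination (-|x| ^ (2 * α + 1)) * this
        · have := abs_of_neg (not_le.1 h)
          linear_combination (|x| ^ (2 * α + 1)) * this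
    rw [this]
    have hc : Continuous (fun x : ℝ => |x| ^ (2 * α + 2)) :=
      continuous_abs.rpow_const (fun x => Or.inr (by linarith))
    refine Continuous.if_le hc hc.neg continuous_const continuous_id ?_
    intro x hx
    have hx' : x = 0 := hx.symm
    rw [hx']
    simp [Real.zero_rpow (show 2 * α + 2 ≠ 0 by linarith)]
  have hd : ∀ x : ℝ, x ≠ 0 → HasDerivAt (fun x : ℝ => x * |x| ^ (2 * α + 1))
      ((2 * α + 2) * |x| ^ (2 * α + 1)) x := by
    intro x hx
    have h1 := (hasDerivAt_id x).mul
      ((hasDerivAt_abs hx).rpow_const (p := 2 * α + 1) (Or.inl (abs_ne_zero.2 hx)))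
    refine h1.congr_deriv ?_
    rw [Real.rpow_sub_one (abs_ne_zero.2 hx)]
    have : (SignType.sign x : ℝ) * x = |x| := by
      exact sign_mul_self x
    have h0 := abs_ne_zero.2 hx
    simp only [id]
    field_simp
    linear_combination (2 * α + 1) * this
  have key := MeasureTheory.integral_eq_of_hasDerivAt_off_countable
    (fun x => (x * |x| ^ (2 * α + 1)) * ((z - x ^ 2) * p.eval x * Real.exp (-x ^ 2)))
    (fun x => (X * (C z - X ^ 2) * derivative p
      + (C (z * (2 * α + 2)) - C (2 * α + 4 + 2 * z) * X ^ 2 + 2 * X ^ 4) * p).eval x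
        * |x| ^ (2 * α + 1) * Real.exp (-x ^ 2)) (a := -Real.sqrt z) (b := Real.sqrt z)
    (s := {0}) (Set.countable_singleton 0) (by
      exact (hG.mul (by fun_prop)).continuousOn) (by
      intro x hx
      have hx0 : x ≠ 0 := hx.2
      have h1 : HasDerivAt (fun x : ℝ => z - x ^ 2) (- (2 * x)) x := by
        simpa using (hasDerivAt_pow 2 x).const_sub z
      have h2 : HasDerivAt (fun x : ℝ => Real.exp (-x ^ 2)) (Real.exp (-x ^ 2) * (- (2 * x))) x := by
        have : HasDerivAt (fun x : ℝ => -x ^ 2) (- (2 * x)) x := by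
          simpa using (hasDerivAt_pow 2 x).fun_neg
        exact this.exp
      refine ((hd x hx0).mul ((h1.mul (p.hasDerivAt x)).mul h2)).congr_deriv ?_
      simp
      ring) (lf_integrable α _ hα hs _)
  rw [key]
  simp [Real.sq_sqrt hz.le]

lemma lf_pos (α a : ℝ) (hα : -1 < α) (ha : 0 < a) (p : Polynomial ℝ) (hp : p ≠ 0) :
    ∫ x in (-a)..a, (p * p).eval x * |x| ^ (2 * α + 1) * Real.exp (-x ^ 2) ≠ 0 := by
  have hi := lf_integrable α a hα ha (p * p)
  have hle : -a ≤ a := by linarith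
  rw [intervalIntegral.integral_of_le hle]
  rw [intervalIntegrable_iff_integrableOn_Ioc_of_le hle] at hi
  apply ne_of_gt
  rw [MeasureTheory.integral_pos_iff_support_of_nonneg _ hi]
  · have hfin : ({x | p.IsRoot x} ∪ {0} : Set ℝ).Finite :=
      (Polynomial.finite_setOfPred_isRoot hp).union (Set.finite_singleton 0)
    have hsub : Set.Ioc (-a) a \ ({x | p.IsRoot x} ∪ {0}) ⊆ Function.support
        (fun x => (p * p).eval x * |x| ^ (2 * α + 1) * Real.exp (-x ^ 2)) ∩ Set.Ioc (-a) a := by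
      rintro x ⟨hx, hn⟩
      simp only [Set.mem_union, Set.mem_ofPred_eq, Set.mem_singleton_iff, not_or] at hn
      refine ⟨?_, hx⟩
      have h1 : p.eval x ≠ 0 := hn.1
      have h2 : |x| ^ (2 * α + 1) ≠ 0 := (Real.rpow_pos_of_pos (abs_pos.2 hn.2) _).ne'
      have h3 := (Real.exp_pos (-x^2)).ne'
      simp only [Function.mem_support, eval_mul]
      exact mul_ne_zero (mul_ne_zero (mul_ne_zero h1 h1) h2) h3
    rw [Measure.restrict_apply' measurableSet_Ioc]
    refine lt_of_lt_of_le ?_ (measure_mono hsub)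
    rw [measure_sdiff_null (hfin.measure_zero volume), Real.volume_Ioc]
    simp [ha]
  · intro x
    simp only [eval_mul, Pi.zero_apply]
    have := mul_self_nonneg (p.eval x)
    positivity

/-- Laguerre–Freud equation for the recurrence coefficients of the truncated generalized
Hermite polynomials. -/
theorem truncated_hermite_laguerre_freud (α z : ℝ) (hα : -1 < α) (hz : 0 < z)
    (S : ℕ → Polynomial ℝ)
    (hS_monic : ∀ n, (S n).Monic)
    (hS_deg : ∀ n, (S n).natDegree = n)
    (hS_orth : ∀ m n, m ≠ n →
      ∫ x in (-(Real.sqrt z))..(Real.sqrt z),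
        (S m).eval x * (S n).eval x * |x| ^ (2 * α + 1) * Real.exp (-x ^ 2) = 0)
    (γ : ℕ → ℝ)
    (hγ0 : γ 0 = 0)
    (hrec0 : Polynomial.X * S 0 = S 1)
    (hrec : ∀ n, 1 ≤ n →
      Polynomial.X * S n = S (n + 1) + Polynomial.C (γ n) * S (n - 1)) :
    ∀ n : ℕ, 2 ≤ n →
      γ (n + 1) * (γ (n + 2) + γ (n + 1) + γ n - (α + z + (n : ℝ) + 2))
        - γ (n - 1) * (γ (n - 2) + γ (n - 1) + γ n - (α + z + (n : ℝ) - 1))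
        - γ n + z = 0 := by
  have hs : 0 < Real.sqrt z := Real.sqrt_pos.2 hz
  let L : Polynomial ℝ →ₗ[ℝ] ℝ :=
    { toFun := fun p => ∫ x in (-(Real.sqrt z))..(Real.sqrt z),
        p.eval x * |x| ^ (2 * α + 1) * Real.exp (-x ^ 2)
      map_add' := by
        intro p q
        rw [← intervalIntegral.integral_add (lf_integrable α _ hα hs p) (lf_integrable α _ hα hs q)]
        congr 1
        funext x
        rw [eval_add]; ring
      map_smul' := by
        intro c p
        rw [RingHom.id_apply, smul_eq_mul, ← intervalIntegral.integral_const_mul]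
        congr 1
        funext x
        rw [eval_smul, smul_eq_mul]; ring }
  refine lf_alg α z S γ L ?_ ?_ ?_ hγ0 ?_ ?_
  · exact (hS_monic 0).natDegree_eq_zero.1 (hS_deg 0)
  · intro m n hmn
    have := hS_orth m n hmn
    simp only [← eval_mul] at this
    exact this
  · intro n
    exact lf_pos α _ hα hs _ (hS_monic n).ne_zero
  · intro n
    rcases Nat.eq_zero_or_pos n with rfl | hn
    · simpa [hγ0] using hrec0
    · exact hrec n hn
  · intro p
    exact lf_pearson α z hα hz p
end

section
/- The recurrence coefficients γ_n of the truncated generalized Hermite polynomials satisfy: (i) for every k ≥ 1, γ_{2k}·((α + 2k + 1) − (γ_{2k+1} + γ_{2k}))·((α + 2k) − (γ_{2k} + γ_{2k−1})) = z·(k − γ_{2k})²; and (ii) for every k ≥ 0, γ_{2k+1}·((α + 2k + 2) − (γ_{2k+2} + γ_{2k+1}))·((α + 2k + 1) − (γ_{2k+1} + γ_{2k})) = z·(k + α + 1 − γ_{2k+1})². -/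
open MeasureTheory intervalIntegral Polynomial

namespace TH

noncomputable def w (α x : ℝ) : ℝ := |x| ^ (2 * α + 1) * Real.exp (-x ^ 2)

lemma w_neg (α x : ℝ) : w α (-x) = w α x := by simp [w]

lemma w_nonneg (α x : ℝ) : 0 ≤ w α x := by unfold w; positivity

lemma w_pos (α : ℝ) {x : ℝ} (hx : x ≠ 0) : 0 < w α x := by
  unfold w
  have := abs_pos.2 hx
  positivity

lemma int_abs (b : ℝ) (hb : -1 < b) (a : ℝ) (ha : 0 < a) :
    IntervalIntegrable (fun x : ℝ => |x| ^ b) volume (-a) a := by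
  have h1 : IntervalIntegrable (fun x : ℝ => |x| ^ b) volume 0 a := by
    refine (intervalIntegrable_rpow' (a := 0) (b := a) hb).congr ?_
    intro x hx
    rw [Set.uIoc_of_le ha.le] at hx
    simp [abs_of_pos hx.1]
  have h2 : IntervalIntegrable (fun x : ℝ => |x| ^ b) volume (-a) 0 := by
    have := (IntervalIntegrable.iff_comp_neg (f := fun x : ℝ => |x| ^ b)).1 h1
    simpa using this.symm
  exact h2.trans h1

lemma int_mul_w (α : ℝ) (hα : -1 < α) (a : ℝ) (ha : 0 < a) (f : ℝ → ℝ) (hf : Continuous f) :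
    IntervalIntegrable (fun x => f x * w α x) volume (-a) a := by
  have h := (int_abs (2 * α + 1) (by linarith) a ha).mul_continuousOn
    (g := fun x => f x * Real.exp (-x ^ 2)) (by fun_prop)
  refine h.congr ?_
  intro x _
  simp only [w]; ring

noncomputable def L (α a : ℝ) (p : ℝ[X]) : ℝ := ∫ x in (-a)..a, p.eval x * w α x

section
variable {α a : ℝ} (hα : -1 < α) (ha : 0 < a)
include hα ha

lemma L_add (p q : ℝ[X]) : L α a (p + q) = L α a p + L α a q := by
  unfold L
  rw [← intervalIntegral.integral_add (int_mul_w α hα a ha _ p.continuous)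
    (int_mul_w α hα a ha _ q.continuous)]
  congr 1; ext x; simp; ring

omit hα ha in
lemma L_C (c : ℝ) (p : ℝ[X]) : L α a (C c * p) = c * L α a p := by
  unfold L
  rw [← intervalIntegral.integral_const_mul]
  congr 1; ext x; simp; ring

lemma L_sum {ι : Type*} (s : Finset ι) (f : ι → ℝ[X]) :
    L α a (∑ i ∈ s, f i) = ∑ i ∈ s, L α a (f i) := by
  classical
  induction s using Finset.induction_on with
  | empty => simp [L]
  | insert i s hi ih => rw [Finset.sum_insert hi, Finset.sum_insert hi, L_add hα ha, ih]

lemma L_sq_pos (p : ℝ[X]) (hp : p ≠ 0) : 0 < L α a (p * p) := by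
  have hI := int_mul_w α hα a ha _ (p * p).continuous
  have hnn : ∀ x, 0 ≤ (p * p).eval x * w α x := fun x => by
    rw [eval_mul]; exact mul_nonneg (mul_self_nonneg _) (w_nonneg _ _)
  have h0 : 0 ≤ L α a (p * p) :=
    intervalIntegral.integral_nonneg (by linarith) (fun x _ => hnn x)
  rcases h0.lt_or_eq with h | h
  · exact h
  exfalso
  unfold L at h
  rw [intervalIntegral.integral_of_le (by linarith)] at h
  have h2 := (integral_eq_zero_iff_of_nonneg (fun x => hnn x) hI.1).1 h.symm
  have hfin : Set.Finite ({x | p.IsRoot x} ∪ {0}) :=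
    (Polynomial.finite_setOfPred_isRoot hp).union (Set.finite_singleton 0)
  have h3 : ∀ᵐ x ∂(volume.restrict (Set.Ioc (-a) a)), x ∉ ({x | p.IsRoot x} ∪ {0}) :=
    ae_restrict_of_ae ((hfin.countable).ae_notMem _)
  have h4 : ∀ᵐ x ∂(volume.restrict (Set.Ioc (-a) a)), False := by
    filter_upwards [h2, h3] with x hx hx'
    simp only [Set.mem_union, Set.mem_ofPred_eq, Set.mem_singleton_iff, not_or] at hx'
    simp only [eval_mul, Pi.zero_apply] at hx
    have := w_pos α hx'.2
    have h5 : p.eval x ≠ 0 := hx'.1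
    exact (mul_ne_zero (mul_ne_zero h5 h5) this.ne') hx
  rw [Filter.eventually_false_iff_eq_bot, ae_eq_bot, Measure.restrict_eq_zero,
    Real.volume_Ioc] at h4
  simp at h4
  linarith

omit ha in
lemma cont_xw : Continuous (fun x : ℝ => x * |x| ^ (2 * α + 1)) := by
  rw [continuous_iff_continuousAt]
  intro x
  by_cases hx : x = 0
  · subst hx
    have hc : Filter.Tendsto (fun x : ℝ => |x| ^ (2 * α + 2)) (nhds 0) (nhds 0) := by
      have : Continuous (fun x : ℝ => |x| ^ (2 * α + 2)) :=
        continuous_abs.rpow_const (fun x => Or.inr (by linarith))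
      have h := this.tendsto 0
      simpa [Real.zero_rpow (show 2 * α + 2 ≠ 0 by linarith)] using h
    unfold ContinuousAt
    simp only [zero_mul]
    refine squeeze_zero_norm (fun x => ?_) hc
    by_cases hx : x = 0
    · subst hx; simp; positivity
    · have := abs_pos.2 hx
      rw [norm_mul, Real.norm_eq_abs, Real.norm_of_nonneg (by positivity),
        show 2 * α + 2 = 1 + (2 * α + 1) by ring, Real.rpow_add this 1, Real.rpow_one]
  · exact continuousAt_id.mul (continuous_abs.continuousAt.rpow_const (Or.inl (by simpa using hx)))

omit ha hα in
lemma deriv_xw (x : ℝ) (hx : x ≠ 0) :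
    HasDerivAt (fun x : ℝ => x * |x| ^ (2 * α + 1)) ((2 * α + 2) * |x| ^ (2 * α + 1)) x := by
  have h1 := (hasDerivAt_abs hx).rpow_const (p := 2 * α + 1) (Or.inl (by simpa using hx))
  have h2 := (hasDerivAt_id x).mul h1
  refine h2.congr_deriv ?_
  have hp := abs_pos.2 hx
  have h3 : |x| ^ (2 * α + 1) = |x| * |x| ^ (2 * α + 1 - 1) := by
    rw [Real.rpow_sub_one hp.ne']; field_simp
  have h4 : x * (SignType.sign x : ℝ) = |x| := by
    rw [mul_comm]; exact sign_mul_self x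
  simp only [id]
  linear_combination h3 * (-(2*α+1)) + (2*α+1) * |x| ^ (2 * α + 1 - 1) * h4

lemma pearson (p : ℝ[X]) :
    L α a (X * derivative p) + (2 * α + 2) * L α a p - 2 * L α a (X ^ 2 * p)
      = a * w α a * (p.eval a + p.eval (-a)) := by
  have hI := int_mul_w α hα a ha _
    (X * derivative p + C (2 * α + 2) * p + C (-2) * (X ^ 2 * p)).continuous
  have key := integral_eq_of_hasDerivAt_off_countable
    (f := fun x => (x * |x| ^ (2 * α + 1)) * (Real.exp (-x ^ 2) * p.eval x))
    (f' := fun x => (X * derivative p + C (2 * α + 2) * p + C (-2) * (X ^ 2 * p)).eval x * w α x)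
    (a := -a) (b := a) (s := {0}) (Set.countable_singleton _)
    (((cont_xw hα).mul (by fun_prop)).continuousOn) ?_ hI
  · have e : L α a (X * derivative p + C (2 * α + 2) * p + C (-2) * (X ^ 2 * p)) = _ := key
    rw [L_add hα ha, L_add hα ha, L_C, L_C] at e
    simp only [abs_neg, neg_sq] at e
    simp only [w]
    linear_combination e
  · rintro x ⟨-, hx⟩
    have hx : x ≠ 0 := hx
    have h2 : HasDerivAt (fun x : ℝ => Real.exp (-x ^ 2)) (Real.exp (-x ^ 2) * (-(2 * x))) x := by
      have := ((hasDerivAt_pow 2 x).neg).exp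
      refine this.congr_deriv ?_
      simp
    refine ((deriv_xw x hx).mul (h2.mul (p.hasDerivAt x))).congr_deriv ?_
    simp [w]
    ring

end

section
variable {α a : ℝ} (hα : -1 < α) (ha : 0 < a) {S : ℕ → ℝ[X]} {γ : ℕ → ℝ}
    (hm : ∀ n, (S n).Monic) (hd : ∀ n, (S n).natDegree = n)
    (ho : ∀ m n, m ≠ n → L α a (S m * S n) = 0)
    (h0 : X * S 0 = S 1)
    (hr : ∀ n, X * S (n + 1) = S (n + 2) + C (γ (n + 1)) * S n)
include hα ha hm hd ho h0 hr

omit hα ha ho h0 hr in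
lemma S_zero : S 0 = 1 := (hm 0).natDegree_eq_zero.1 (hd 0)

lemma L_low (j : ℕ) : ∀ n, j < n → L α a (S n * X ^ j) = 0 := by
  induction j with
  | zero =>
    intro n hn
    have := ho n 0 (by omega)
    rw [S_zero hm hd] at this
    simpa using this
  | succ j ih =>
    intro n hn
    obtain ⟨m, rfl⟩ : ∃ m, n = m + 1 := ⟨n - 1, by omega⟩
    have : S (m + 1) * X ^ (j + 1) = S (m + 2) * X ^ j + C (γ (m + 1)) * (S m * X ^ j) := by
      linear_combination X ^ j * hr m
    rw [this, L_add hα ha, L_C, ih _ (by omega), ih _ (by omega)]; simp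

lemma L_deg (n : ℕ) (p : ℝ[X]) (hp : p.natDegree ≤ n) :
    L α a (S n * p) = p.coeff n * L α a (S n * S n) := by
  have gen : ∀ p : ℝ[X], p.natDegree ≤ n →
      L α a (S n * p) = p.coeff n * L α a (S n * X ^ n) := by
    intro p hp
    conv_lhs => rw [p.as_sum_range_C_mul_X_pow' (n := n + 1) (by omega), Finset.mul_sum]
    rw [L_sum hα ha, Finset.sum_range_succ, Finset.sum_eq_zero, zero_add]
    · rw [← L_C]; congr 1; ring
    · intro i hi
      have : S n * (C (p.coeff i) * X ^ i) = C (p.coeff i) * (S n * X ^ i) := by ring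
      rw [this, L_C, L_low hα ha hm hd ho h0 hr i n (Finset.mem_range.1 hi), mul_zero]
  have h1 := gen (S n) (hd n).le
  have h2 : (S n).coeff n = 1 := by
    have := (hm n).coeff_natDegree; rwa [hd] at this
  rw [h2, one_mul] at h1
  rw [h1]; exact gen p hp

lemma coeff_top (n : ℕ) : (S n).coeff n = 1 := by
  have := (hm n).coeff_natDegree; rwa [hd] at this

lemma H_succ (n : ℕ) : L α a (S (n + 1) * S (n + 1)) = γ (n + 1) * L α a (S n * S n) := by
  have e1 : L α a (S (n + 1) * (X * S n)) = 1 * L α a (S (n + 1) * S (n + 1)) := by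
    rw [L_deg hα ha hm hd ho h0 hr (n + 1) (X * S n)]
    · rw [coeff_X_mul, coeff_top hα ha hm hd ho h0 hr]
    · refine natDegree_mul_le.trans ?_
      rw [hd, natDegree_X]; omega
  have e2 : S (n + 1) * (X * S n) = S (n + 2) * S n + C (γ (n + 1)) * (S n * S n) := by
    linear_combination S n * hr n
  rw [e2, L_add hα ha, L_C, ho _ _ (by omega)] at e1
  linarith

lemma L_XS (hγ0 : γ 0 = 0) (n : ℕ) :
    L α a (X ^ 2 * (S n * S n)) = (γ (n + 1) + γ n) * L α a (S n * S n) := by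
  have hs := H_succ hα ha hm hd ho h0 hr
  cases n with
  | zero =>
    have : X ^ 2 * (S 0 * S 0) = S 1 * S 1 := by rw [← h0]; ring
    rw [this, hγ0, hs 0]; ring
  | succ n =>
    have : X ^ 2 * (S (n + 1) * S (n + 1)) = S (n + 2) * S (n + 2)
        + C (2 * γ (n + 1)) * (S (n + 2) * S n) + C (γ (n + 1) ^ 2) * (S n * S n) := by
      simp only [C_mul, C_pow]
      rw [show (C 2 : ℝ[X]) = 2 from rfl]
      linear_combination (X * S (n + 1) + S (n + 2) + C (γ (n + 1)) * S n) * hr n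
    rw [this, L_add hα ha, L_add hα ha, L_C, L_C, ho (n + 2) n (by omega), hs (n + 1), hs n]
    ring

lemma parity (n : ℕ) : ∀ x, (S n).eval (-x) = (-1) ^ n * (S n).eval x := by
  induction n using Nat.strong_induction_on with
  | _ n ih =>
    intro x
    match n with
    | 0 => simp [S_zero hm hd]
    | 1 => rw [← h0]; simp [S_zero hm hd]
    | n + 2 =>
      have e := eq_sub_of_add_eq (hr n).symm
      rw [e]
      simp only [eval_sub, eval_mul, eval_X, eval_C]
      rw [ih n (by omega), ih (n + 1) (by omega)]
      ring

lemma diag (hγ0 : γ 0 = 0) (n : ℕ) :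
    ((α + n + 1) - (γ (n + 1) + γ n)) * L α a (S n * S n) = a * w α a * (S n).eval a ^ 2 := by
  have hp := pearson hα ha (S n * S n)
  rw [L_XS hα ha hm hd ho h0 hr hγ0] at hp
  have e : X * derivative (S n * S n) = C 2 * (S n * (X * derivative (S n))) := by
    rw [derivative_mul, show (C 2 : ℝ[X]) = 2 from rfl]; ring
  rw [e, L_C, L_deg hα ha hm hd ho h0 hr] at hp
  · have hc : (X * derivative (S n)).coeff n = (n : ℝ) := by
      cases n with
      | zero => simp
      | succ n =>
        rw [coeff_X_mul, coeff_derivative, coeff_top hα ha hm hd ho h0 hr]; push_cast; ring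
    have h1 : ((-1 : ℝ) ^ n) * (-1) ^ n = 1 := by rw [← mul_pow]; simp
    rw [hc, eval_mul, eval_mul, parity hα ha hm hd ho h0 hr] at hp
    linear_combination hp / 2 + a * w α a * (S n).eval a ^ 2 / 2 * h1
  · cases n with
    | zero => simp [S_zero hm hd]
    | succ n =>
      refine natDegree_mul_le.trans ?_
      have := natDegree_derivative_le (S (n + 1))
      rw [hd] at this
      rw [natDegree_X]; omega

lemma final (hγ0 : γ 0 = 0) (m : ℕ) (q : ℝ[X]) (hq : X * q = S (m + 1) * S m) (ε : ℝ)
    (hε : L α a q = ε * L α a (S m * S m)) :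
    γ (m + 1) * ((α + (m + 1 : ℕ) + 1) - (γ (m + 2) + γ (m + 1)))
      * ((α + m + 1) - (γ (m + 1) + γ m))
      = a ^ 2 * ((m + 1 + (2 * α + 1) * ε) / 2 - γ (m + 1)) ^ 2 := by
  have hp := pearson hα ha q
  have hs := H_succ hα ha hm hd ho h0 hr m
  have d := coeff_top hα ha hm hd ho h0 hr
  have e1 : X * derivative q = C (-1) * q + S m * derivative (S (m + 1))
      + S (m + 1) * derivative (S m) := by
    have := congrArg derivative hq
    rw [derivative_mul, derivative_mul, derivative_X] at this
    rw [C_neg, C_1]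
    linear_combination this
  have e2 : X ^ 2 * q = S (m + 1) * (X * S m) := by linear_combination X * hq
  have l1 : L α a (S m * derivative (S (m + 1))) = (m + 1) * L α a (S m * S m) := by
    rw [L_deg hα ha hm hd ho h0 hr, coeff_derivative, d]
    · ring
    · have := natDegree_derivative_le (S (m + 1))
      rw [hd] at this; omega
  have l2 : L α a (S (m + 1) * derivative (S m)) = 0 := by
    have := natDegree_derivative_le (S m)
    rw [hd] at this
    rw [L_deg hα ha hm hd ho h0 hr, coeff_eq_zero_of_natDegree_lt (by omega), zero_mul]
    omega
  have l3 : L α a (S (m + 1) * (X * S m)) = γ (m + 1) * L α a (S m * S m) := by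
    rw [L_deg hα ha hm hd ho h0 hr, coeff_X_mul, d, one_mul, hs]
    refine natDegree_mul_le.trans ?_
    rw [hd, natDegree_X]; omega
  rw [e1, e2, L_add hα ha, L_add hα ha, L_C, l1, l2, l3, hε] at hp
  have q1 := congrArg (eval a) hq
  have q2 := congrArg (eval (-a)) hq
  simp only [eval_mul, eval_X] at q1 q2
  rw [parity hα ha hm hd ho h0 hr, parity hα ha hm hd ho h0 hr] at q2
  have h1 : ((-1 : ℝ) ^ m) * (-1) ^ m = 1 := by rw [← mul_pow]; simp
  have q3 : a * (q.eval a + q.eval (-a)) = 2 * ((S (m + 1)).eval a * (S m).eval a) := by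
    rw [pow_succ] at q2
    linear_combination q1 - q2 + (S (m + 1)).eval a * (S m).eval a * h1
  have g1 := diag hα ha hm hd ho h0 hr hγ0 m
  have g2 := diag hα ha hm hd ho h0 hr hγ0 (m + 1)
  rw [hs] at g2
  have hH : L α a (S m * S m) ≠ 0 := (L_sq_pos hα ha _ (hm m).ne_zero).ne'
  set H := L α a (S m * S m)
  have k : a * ((m + 1 + (2 * α + 1) * ε) / 2 - γ (m + 1)) * H
      = a * w α a * ((S (m + 1)).eval a * (S m).eval a) := by
    linear_combination a / 2 * hp + a * w α a / 2 * q3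
  apply mul_right_cancel₀ (pow_ne_zero 2 hH)
  calc _ = (((α + (m + 1 : ℕ) + 1) - (γ (m + 2) + γ (m + 1))) * (γ (m + 1) * H))
      * (((α + m + 1) - (γ (m + 1) + γ m)) * H) := by ring
    _ = (a * w α a * ((S (m + 1)).eval a * (S m).eval a)) ^ 2 := by rw [g1, g2]; ring
    _ = _ := by rw [← k]; ring

lemma odd_div (n : ℕ) (hn : Odd n) : X * (S n).divX = S n := by
  have h := parity hα ha hm hd ho h0 hr n 0
  rw [hn.neg_one_pow] at h
  have h1 : (S n).coeff 0 = 0 := by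
    rw [coeff_zero_eq_eval_zero]; simp at h; linarith
  have := X_mul_divX_add (S n)
  rwa [h1, C_0, add_zero] at this

end

end TH

/-- Nonlinear relations for the recurrence coefficients of the truncated generalized
Hermite polynomials, at even and odd indices. -/
theorem truncated_hermite_nonlinear (α z : ℝ) (hα : -1 < α) (hz : 0 < z)
    (S : ℕ → Polynomial ℝ)
    (hS_monic : ∀ n, (S n).Monic)
    (hS_deg : ∀ n, (S n).natDegree = n)
    (hS_orth : ∀ m n, m ≠ n →
      ∫ x in (-(Real.sqrt z))..(Real.sqrt z),
        (S m).eval x * (S n).eval x * |x| ^ (2 * α + 1) * Real.exp (-x ^ 2) = 0)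
    (γ : ℕ → ℝ)
    (hγ0 : γ 0 = 0)
    (hrec0 : Polynomial.X * S 0 = S 1)
    (hrec : ∀ n, 1 ≤ n →
      Polynomial.X * S n = S (n + 1) + Polynomial.C (γ n) * S (n - 1)) :
    (∀ k : ℕ, 1 ≤ k →
      γ (2 * k) * ((α + 2 * (k : ℝ) + 1) - (γ (2 * k + 1) + γ (2 * k)))
          * ((α + 2 * (k : ℝ)) - (γ (2 * k) + γ (2 * k - 1)))
        = z * ((k : ℝ) - γ (2 * k)) ^ 2) ∧
    (∀ k : ℕ,
      γ (2 * k + 1) * ((α + 2 * (k : ℝ) + 2) - (γ (2 * k + 2) + γ (2 * k + 1)))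
          * ((α + 2 * (k : ℝ) + 1) - (γ (2 * k + 1) + γ (2 * k)))
        = z * ((k : ℝ) + α + 1 - γ (2 * k + 1)) ^ 2) := by
  have ha : 0 < Real.sqrt z := Real.sqrt_pos.2 hz
  have ho : ∀ m n, m ≠ n → TH.L α (Real.sqrt z) (S m * S n) = 0 := by
    intro m n h
    rw [← hS_orth m n h]
    unfold TH.L
    congr 1; ext x; simp only [eval_mul, TH.w]; ring
  have hr : ∀ n, X * S (n + 1) = S (n + 2) + C (γ (n + 1)) * S n := fun n => hrec (n + 1) (by omega)
  have hod := TH.odd_div hα ha hS_monic hS_deg ho hrec0 hr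
  have hdeg := TH.L_deg hα ha hS_monic hS_deg ho hrec0 hr
  have hct := TH.coeff_top hα ha hS_monic hS_deg ho hrec0 hr
  have fin := TH.final hα ha hS_monic hS_deg ho hrec0 hr hγ0
  simp only [Real.sq_sqrt hz.le] at fin
  constructor
  · intro k hk
    obtain ⟨j, rfl⟩ : ∃ j, k = j + 1 := ⟨k - 1, by omega⟩
    have hn := hod (2 * j + 1) ⟨j, rfl⟩
    have h := fin (2 * j + 1) (S (2 * j + 2) * (S (2 * j + 1)).divX)
      (by linear_combination S (2 * j + 2) * hn) 0 (by
        have hle : (S (2 * j + 1)).divX.natDegree = 2 * j := by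
          rw [natDegree_divX_eq_natDegree_tsub_one, hS_deg]; rfl
        rw [hdeg _ _ (by omega), coeff_eq_zero_of_natDegree_lt (by omega)]; ring)
    rw [show 2 * (j + 1) - 1 = 2 * j + 1 by omega, show 2 * (j + 1) = 2 * j + 2 by ring]
    push_cast at h ⊢
    linear_combination h
  · intro k
    have hn := hod (2 * k + 1) ⟨k, rfl⟩
    have h := fin (2 * k) (S (2 * k) * (S (2 * k + 1)).divX)
      (by linear_combination S (2 * k) * hn) 1 (by
        have hle : (S (2 * k + 1)).divX.natDegree = 2 * k := by
          rw [natDegree_divX_eq_natDegree_tsub_one, hS_deg]; rfl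
        rw [hdeg _ _ (by omega), coeff_divX, hct])
    push_cast at h ⊢
    linear_combination h
end
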